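/- arXiv:1911.01544 — 2 statements merged into one kernel-verified Lean document; each statement's English description precedes it below -/
import Mathlib

section
/- For any ψ > 0, the map κ ↦ T(ψ,κ) is strictly monotonically increasing on {κ > 0 : ψ > ψ↓(κ)}, and lim_{κ→∞} T(ψ,κ) = ∞. -/
open MeasureTheory ProbabilityTheory Real Filter Set Topology

noncomputable section

namespace MaxMargin

/-- The standard Gaussian measure on `ℝ`. -/
def stdG : Measure ℝ := gaussianReal 0 1

/-- The function `F_κ(c₁,c₂) = (E[((κ − c₁·Y·G − c₂·Z)₊)²])^{1/2}` where `G, Z` are independent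
standard Gaussians and, conditionally on `G`, `Y ∈ {+1,−1}` with `P(Y = +1 | G) = f(G)`. -/
def Fk (f : ℝ → ℝ) (κ c₁ c₂ : ℝ) : ℝ :=
  Real.sqrt (∫ g, ∫ z,
    (f g * (max (κ - c₁ * g - c₂ * z) 0) ^ 2
      + (1 - f g) * (max (κ + c₁ * g - c₂ * z) 0) ^ 2) ∂stdG ∂stdG)

/-- Non-degeneracy of `f`: the variable `T = Y·G` satisfies `P(T < x) > 0` and `P(T > x) > 0`
for every `x ∈ ℝ`. -/
def NonDeg (f : ℝ → ℝ) : Prop :=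
  ∀ x : ℝ,
    (0 < ∫ g, (f g * (if g < x then (1:ℝ) else 0)
          + (1 - f g) * (if -g < x then (1:ℝ) else 0)) ∂stdG) ∧
    (0 < ∫ g, (f g * (if x < g then (1:ℝ) else 0)
          + (1 - f g) * (if x < -g then (1:ℝ) else 0)) ∂stdG)


/-- Points of `ℝ³` carrying the coordinates `(G, X, W)`. -/
abbrev Pt : Type := ℝ × ℝ × ℝ

/-- First coordinate `G`. -/
def Gc : Pt → ℝ := fun q => q.1

/-- Second coordinate `X`. -/
def Xc : Pt → ℝ := fun q => q.2.1

/-- Third coordinate `W`. -/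
def Wc : Pt → ℝ := fun q => q.2.2

/-- The inner product `⟨h₁,h₂⟩_P = E_P[h₁h₂]`. -/
def ip (P : Measure Pt) (h₁ h₂ : Pt → ℝ) : ℝ := ∫ q, h₁ q * h₂ q ∂P

/-- The norm `‖h‖_P = ⟨h,h⟩_P^{1/2}`. -/
def pnorm (P : Measure Pt) (h : Pt → ℝ) : ℝ := Real.sqrt (ip P h h)

/-- Projection onto the orthogonal complement of `W`: `Π_{W⊥}(h) = h − ⟨h,W⟩_P·W`. -/
def projW (P : Measure Pt) (h : Pt → ℝ) : Pt → ℝ := fun q => h q - ip P h Wc * Wc q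

/-- Partial derivative of `F_κ` in its first argument. -/
def d1F (f : ℝ → ℝ) (κ c₁ c₂ : ℝ) : ℝ := deriv (fun t => Fk f κ t c₂) c₁

/-- Partial derivative of `F_κ` in its second argument. -/
def d2F (f : ℝ → ℝ) (κ c₁ c₂ : ℝ) : ℝ := deriv (fun t => Fk f κ c₁ t) c₂

/-- `ψ*(0) = min_{c ∈ ℝ} F₀(c,1)²`. -/
def psiStar0 (f : ℝ → ℝ) : ℝ := ⨅ c : ℝ, (Fk f 0 c 1) ^ 2

/-- The functional `𝓡_{ψ,κ,P}(h) = ψ^{−1/2}·F_κ(⟨h, X^{1/2}W⟩_P, ‖Π_{W⊥}(X^{1/2}h)‖_P)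
+ ⟨h, X^{1/2}·Π_{W⊥}(G)⟩_P`. -/
def Rfun (f : ℝ → ℝ) (P : Measure Pt) (ψ κ : ℝ) (h : Pt → ℝ) : ℝ :=
  (Real.sqrt ψ)⁻¹ *
      Fk f κ (ip P h (fun q => Real.sqrt (Xc q) * Wc q))
        (pnorm P (projW P (fun q => Real.sqrt (Xc q) * h q)))
    + ip P h (fun q => Real.sqrt (Xc q) * projW P Gc q)

/-- `ζ(P) = ‖X^{−1/2}W‖_P^{−1}`. -/
def zetaP (P : Measure Pt) : ℝ := (pnorm P (fun q => (Real.sqrt (Xc q))⁻¹ * Wc q))⁻¹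

/-- `ζ = (E_μ[X⁻¹W²])^{−1/2}` for `(X,W) ~ μ`. -/
def zetaMu (μ : Measure (ℝ × ℝ)) : ℝ := (Real.sqrt (∫ q, (q.1)⁻¹ * q.2 ^ 2 ∂μ))⁻¹

/-- `ω = (E_μ[(1 − ζ²X⁻¹)²W²])^{1/2}`. -/
def omegaMu (μ : Measure (ℝ × ℝ)) : ℝ :=
  Real.sqrt (∫ q, (1 - (zetaMu μ) ^ 2 * (q.1)⁻¹) ^ 2 * q.2 ^ 2 ∂μ)

/-- `ψ₊(κ)`. -/
def psiPlus (f : ℝ → ℝ) (μ : Measure (ℝ × ℝ)) (κ : ℝ) : ℝ :=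
  if 0 < d1F f κ (zetaMu μ) 0 then 0
  else (d2F f κ (zetaMu μ) 0) ^ 2 - (omegaMu μ) ^ 2 * (d1F f κ (zetaMu μ) 0) ^ 2

/-- `ψ₋(κ)`. -/
def psiMinus (f : ℝ → ℝ) (μ : Measure (ℝ × ℝ)) (κ : ℝ) : ℝ :=
  if 0 < d1F f κ (-(zetaMu μ)) 0 then 0
  else (d2F f κ (-(zetaMu μ)) 0) ^ 2 - (omegaMu μ) ^ 2 * (d1F f κ (-(zetaMu μ)) 0) ^ 2

/-- `ψ↓(κ) = max{ψ*(0), ψ₊(κ), ψ₋(κ)}`. -/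
def psiDown (f : ℝ → ℝ) (μ : Measure (ℝ × ℝ)) (κ : ℝ) : ℝ :=
  max (max (psiStar0 f) (psiPlus f μ κ)) (psiMinus f μ κ)

/-- The system of equations with expectations over `(X,W) ~ μ`:
with `A = ∂₁F_κ(c₁,c₂) − c₁c₂⁻¹∂₂F_κ(c₁,c₂)` and
`D = c₂⁻¹∂₂F_κ(c₁,c₂)·X^{1/2} + ψ^{1/2}·s·X^{−1/2}`,
`−c₁ = E_μ[A·W²·X^{1/2}/D]`, `c₁² + c₂² = E_μ[(ψX + A²W²X)/D²]`, `1 = E_μ[(ψ + A²W²)/D²]`. -/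
def SolSysMu (f : ℝ → ℝ) (μ : Measure (ℝ × ℝ)) (ψ κ c₁ c₂ s : ℝ) : Prop :=
  (-c₁ = ∫ q, (d1F f κ c₁ c₂ - c₁ * c₂⁻¹ * d2F f κ c₁ c₂) * q.2 ^ 2 * Real.sqrt q.1
      / (c₂⁻¹ * d2F f κ c₁ c₂ * Real.sqrt q.1 + Real.sqrt ψ * s * (Real.sqrt q.1)⁻¹) ∂μ)
  ∧ (c₁ ^ 2 + c₂ ^ 2 = ∫ q,
      (ψ * q.1 + (d1F f κ c₁ c₂ - c₁ * c₂⁻¹ * d2F f κ c₁ c₂) ^ 2 * q.2 ^ 2 * q.1)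
      / (c₂⁻¹ * d2F f κ c₁ c₂ * Real.sqrt q.1 + Real.sqrt ψ * s * (Real.sqrt q.1)⁻¹) ^ 2 ∂μ)
  ∧ (1 = ∫ q,
      (ψ + (d1F f κ c₁ c₂ - c₁ * c₂⁻¹ * d2F f κ c₁ c₂) ^ 2 * q.2 ^ 2)
      / (c₂⁻¹ * d2F f κ c₁ c₂ * Real.sqrt q.1 + Real.sqrt ψ * s * (Real.sqrt q.1)⁻¹) ^ 2 ∂μ)

/-- `T(ψ,κ) = ψ^{−1/2}(F_κ(c₁,c₂) − c₁∂₁F_κ(c₁,c₂) − c₂∂₂F_κ(c₁,c₂)) − s`. -/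
def Tval (f : ℝ → ℝ) (ψ κ c₁ c₂ s : ℝ) : ℝ :=
  (Real.sqrt ψ)⁻¹ * (Fk f κ c₁ c₂ - c₁ * d1F f κ c₁ c₂ - c₂ * d2F f κ c₁ c₂) - s

/-!
`T(ψ, κ)` is the minimum over the unit ball of `L²(P)` of the functional `R_{ψ,κ,P}`, and the system
of equations expresses its Karush-Kuhn-Tucker conditions at `h = -(ψ^{1/2} G + A W) / D`: the three
equations say that `⟨X^{1/2} W, h⟩ = c₁`, that the projection of `X^{1/2} h` orthogonal to `W` has
norm `c₂`, and that `‖h‖ = 1`. These conditions are sufficient for minimality since `F_κ` is convex,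
with a gradient inequality that is an instance of the Cauchy-Schwarz inequality.

For `κ < κ'`, the minimizer `h'` at `κ'` has `c₂ > 0`, where `F_κ < F_κ'`, so that
`T(ψ, κ) ≤ R_{ψ,κ,P}(h') < R_{ψ,κ',P}(h') = T(ψ, κ')`. As the `L²` norm dominates the mean,
`R_{ψ,κ,P} ≥ ψ^{-1/2} κ - C` on the unit ball with `C` independent of `κ`, whence the divergence.
-/

section SquareIntegrable

open scoped ENNReal

variable {Ω : Type*} [MeasurableSpace Ω] {ν : Measure Ω} {u v : Ω → ℝ}

lemma integral_mul_le_sqrt_mul_sqrt (hu : MemLp u 2 ν) (hv : MemLp v 2 ν) :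
    ∫ x, u x * v x ∂ν ≤ √(∫ x, u x ^ 2 ∂ν) * √(∫ x, v x ^ 2 ∂ν) := by
  have inner_toLp {u v : Ω → ℝ} (hu : MemLp u 2 ν) (hv : MemLp v 2 ν) :
      inner ℝ (hu.toLp u) (hv.toLp v) = ∫ x, u x * v x ∂ν := by
    rw [L2.inner_def]
    refine integral_congr_ae ?_
    filter_upwards [hu.coeFn_toLp, hv.coeFn_toLp] with x hux hvx
    rw [hux, hvx, real_inner_eq_re_inner, RCLike.inner_apply', conj_trivial, RCLike.re_to_real]
  have norm_toLp {u : Ω → ℝ} (hu : MemLp u 2 ν) : ‖hu.toLp u‖ = √(∫ x, u x ^ 2 ∂ν) := by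
    rw [norm_eq_sqrt_real_inner, inner_toLp hu hu]
    simp only [sq]
  rw [← inner_toLp hu hv, ← norm_toLp hu, ← norm_toLp hv]
  exact real_inner_le_norm _ _

lemma mul_max_zero_eq_sq (x : ℝ) : x * max x 0 = max x 0 ^ 2 := by
  rcases le_total x 0 with hx | hx
  · simp [max_eq_right hx]
  · rw [max_eq_left hx, sq]

/- The subgradient inequality for `v ↦ ‖v₊‖`, multiplied through by `‖v₊‖`. -/
lemma integral_mul_max_le (hu : MemLp u 2 ν) (hv : MemLp v 2 ν) :
    ∫ x, u x * max (v x) 0 ∂ν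
      ≤ √(∫ x, max (u x) 0 ^ 2 ∂ν) * √(∫ x, max (v x) 0 ^ 2 ∂ν) :=
  calc ∫ x, u x * max (v x) 0 ∂ν ≤ ∫ x, max (u x) 0 * max (v x) 0 ∂ν :=
        integral_mono (hu.integrable_mul hv.pos_part) (hu.pos_part.integrable_mul hv.pos_part)
          fun _ => mul_le_mul_of_nonneg_right (le_max_left _ _) (le_max_right _ _)
    _ ≤ _ := integral_mul_le_sqrt_mul_sqrt hu.pos_part hv.pos_part

lemma abs_sq_max_sub_sub_le (x d : ℝ) :
    |max (x - d) 0 ^ 2 - max x 0 ^ 2 + 2 * d * max x 0| ≤ d ^ 2 := by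
  rw [abs_le]
  rcases max_cases (x - d) 0 with ⟨hd, hd'⟩ | ⟨hd, hd'⟩ <;>
    rcases max_cases x 0 with ⟨hx, hx'⟩ | ⟨hx, hx'⟩ <;> rw [hd, hx] <;> constructor <;>
    nlinarith [sq_nonneg d, sq_nonneg (x - d), sq_nonneg x]

lemma abs_integral_sq_max_sub_sub_le (hu : MemLp u 2 ν) (hv : MemLp v 2 ν) (d : ℝ) :
    |(∫ x, max (u x - d * v x) 0 ^ 2 ∂ν) - ∫ x, max (u x) 0 ^ 2 ∂ν
        + 2 * d * ∫ x, v x * max (u x) 0 ∂ν| ≤ (∫ x, v x ^ 2 ∂ν) * d ^ 2 := by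
  have hud : MemLp (fun x => max (u x - d * v x) 0) 2 ν := (hu.sub (hv.const_mul d)).pos_part
  have hdiff : Integrable (fun x => max (u x - d * v x) 0 ^ 2 - max (u x) 0 ^ 2) ν :=
    hud.integrable_sq.sub hu.pos_part.integrable_sq
  have hlin : Integrable (fun x => 2 * d * (v x * max (u x) 0)) ν :=
    (hv.integrable_mul hu.pos_part).const_mul _
  rw [← integral_sub hud.integrable_sq hu.pos_part.integrable_sq, ← integral_const_mul,
    ← integral_add hdiff hlin, ← integral_mul_const, ← Real.norm_eq_abs]
  refine norm_integral_le_of_norm_le (hv.integrable_sq.mul_const _) (ae_of_all _ fun x => ?_)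
  rw [Real.norm_eq_abs]
  convert abs_sq_max_sub_sub_le (u x) (d * v x) using 1 <;> ring_nf

lemma hasDerivAt_integral_sq_max (hu : MemLp u 2 ν) (hv : MemLp v 2 ν) (t₀ : ℝ) :
    HasDerivAt (fun t => ∫ x, max (u x - t * v x) 0 ^ 2 ∂ν)
      (-2 * ∫ x, v x * max (u x - t₀ * v x) 0 ∂ν) t₀ := by
  have hbound (t : ℝ) := abs_integral_sq_max_sub_sub_le (hu.sub (hv.const_mul t₀)) hv (t - t₀)
  simp only [Pi.sub_apply, sub_sub, ← add_mul, add_sub_cancel] at hbound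
  rw [hasDerivAt_iff_isLittleO]
  have hquad : (fun t : ℝ => (t - t₀) ^ 2) =o[𝓝 t₀] fun t => t - t₀ := by
    simpa using Asymptotics.isLittleO_pow_sub_sub t₀ one_lt_two
  refine (Asymptotics.IsBigO.of_bound (∫ x, v x ^ 2 ∂ν)
    (Eventually.of_forall fun t => ?_)).trans_isLittleO hquad
  rw [Real.norm_eq_abs, Real.norm_of_nonneg (sq_nonneg _)]
  refine le_of_eq_of_le (congrArg _ ?_) (hbound t)
  rw [smul_eq_mul]
  ring

lemma memLp_sqrt_mul {X : Ω → ℝ} {c : ℝ} (hXm : Measurable X) (hX : ∀ᵐ x ∂ν, X x ≤ c)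
    (hu : MemLp u 2 ν) : MemLp (fun x => √(X x) * u x) 2 ν := by
  refine hu.mul' (p := ∞) (memLp_top_of_bound (by fun_prop) √c ?_)
  filter_upwards [hX] with x hx
  rw [Real.norm_of_nonneg (Real.sqrt_nonneg _)]
  exact Real.sqrt_le_sqrt hx

end SquareIntegrable

section Gaussian

instance : IsProbabilityMeasure stdG := by unfold stdG; infer_instance

instance : stdG.IsOpenPosMeasure :=
  (gaussianReal_absolutelyContinuous' 0 one_ne_zero).isOpenPosMeasure

instance : stdG.IsNegInvariant :=
  ⟨(gaussianReal_map_neg (μ := 0) (v := 1)).trans (by rw [neg_zero, stdG])⟩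

lemma memLp_stdG : MemLp (fun x : ℝ => x) 2 stdG := memLp_id_gaussianReal' 2 (by simp)

lemma integral_stdG : ∫ x, x ∂stdG = 0 := integral_id_gaussianReal

lemma integral_sq_stdG : ∫ x, x ^ 2 ∂stdG = 1 := by
  rw [← variance_of_integral_eq_zero aemeasurable_id' integral_stdG, stdG,
    variance_fun_id_gaussianReal, NNReal.coe_one]

lemma integral_affine_mul_affine_stdG (a b a' b' : ℝ) :
    ∫ x, (a * x + b) * (a' * x + b') ∂stdG = a * a' + b * b' := by
  have hsq : Integrable (fun x => a * a' * x ^ 2) stdG := memLp_stdG.integrable_sq.const_mul _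
  have hlin : Integrable (fun x => (a * b' + b * a') * x) stdG :=
    (memLp_stdG.integrable one_le_two).const_mul _
  have hsum : Integrable (fun x => a * a' * x ^ 2 + (a * b' + b * a') * x) stdG := hsq.add hlin
  calc ∫ x, (a * x + b) * (a' * x + b') ∂stdG
      = ∫ x, (a * a' * x ^ 2 + (a * b' + b * a') * x + b * b') ∂stdG := by
        congr with x
        ring
    _ = a * a' + b * b' := by
        rw [integral_add hsum (integrable_const _), integral_add hsq hlin, integral_const_mul,
          integral_const_mul, integral_sq_stdG, integral_stdG, integral_const, probReal_univ,
          mul_one, mul_zero, add_zero, one_smul]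

end Gaussian

/-- The law of `T = Y·G`. As `G` is symmetric, `T` has the density `t ↦ f t + (1 - f (-t))` with
respect to the standard Gaussian. -/
def signedLaw (f : ℝ → ℝ) : Measure ℝ :=
  stdG.withDensity fun t => ENNReal.ofReal (f t + (1 - f (-t)))

/-- The law of `(T, Z)`, under which `F_κ(a, b)` is the `L²` norm of `(κ - a T - b Z)₊`. -/
def marginLaw (f : ℝ → ℝ) : Measure (ℝ × ℝ) := (signedLaw f).prod stdG

section MarginLaw

variable {f : ℝ → ℝ} (hf : Measurable f) (hf01 : ∀ x, f x ∈ Set.Icc (0 : ℝ) 1)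

include hf hf01

lemma integrable_mul_of_mem_Icc {ν : Measure ℝ} {φ : ℝ → ℝ} (hφ : Integrable φ ν) :
    Integrable (fun t => f t * φ t) ν := by
  refine hφ.bdd_mul (c := 1) hf.aestronglyMeasurable (ae_of_all _ fun t => ?_)
  rw [Real.norm_of_nonneg (hf01 t).1]
  exact (hf01 t).2

omit hf in
lemma signedDensity_nonneg (t : ℝ) : 0 ≤ f t + (1 - f (-t)) := by
  linarith [(hf01 t).1, (hf01 (-t)).2]

lemma integral_signedLaw {φ : ℝ → ℝ} (hφ : Integrable φ stdG) :
    ∫ t, φ t ∂signedLaw f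
      = ∫ g, (f g * φ g + (1 - f g) * φ (-g)) ∂stdG := by
  have hcomp : Measurable fun t => 1 - f t := hf.const_sub 1
  have hcomp01 (t : ℝ) : 1 - f t ∈ Set.Icc (0 : ℝ) 1 :=
    ⟨by linarith [(hf01 t).2], by linarith [(hf01 t).1]⟩
  have hpos := integrable_mul_of_mem_Icc hf hf01 hφ
  have hneg := integrable_mul_of_mem_Icc hcomp hcomp01 hφ.comp_neg
  have hneg' : Integrable (fun t => (1 - f (-t)) * φ t) stdG := by simpa using hneg.comp_neg
  have hflip : ∫ g, (1 - f g) * φ (-g) ∂stdG = ∫ g, (1 - f (-g)) * φ g ∂stdG := by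
    simpa using (integral_neg_eq_self (fun g => (1 - f (-g)) * φ g) stdG)
  rw [signedLaw, integral_withDensity_eq_integral_toReal_smul (by fun_prop) (by simp),
    integral_add hpos hneg, hflip, ← integral_add hpos hneg']
  refine integral_congr_ae (ae_of_all _ fun t => ?_)
  simp only [ENNReal.toReal_ofReal (signedDensity_nonneg hf01 t), smul_eq_mul, add_mul]

lemma isProbabilityMeasure_signedLaw : IsProbabilityMeasure (signedLaw f) := by
  have htotal := integral_signedLaw hf hf01 (integrable_const (1 : ℝ))
  simp only [mul_one, add_sub_cancel, integral_const, smul_eq_mul, probReal_univ] at htotal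
  exact ⟨(ENNReal.toReal_eq_one_iff _).1 htotal⟩

lemma isProbabilityMeasure_marginLaw : IsProbabilityMeasure (marginLaw f) := by
  have := isProbabilityMeasure_signedLaw hf hf01
  unfold marginLaw
  infer_instance

omit hf in
lemma memLp_signedLaw {φ : ℝ → ℝ} (hφ : MemLp φ 2 stdG) :
    MemLp φ 2 (signedLaw f) := by
  refine hφ.of_measure_le_smul (c := 2) (by simp) ?_
  rw [signedLaw, ← withDensity_const]
  refine withDensity_mono (ae_of_all _ fun t => ENNReal.ofReal_le_of_le_toReal ?_)
  rw [ENNReal.toReal_ofNat]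
  linarith [(hf01 t).2, (hf01 (-t)).1]

omit hf in
lemma memLp_fst_marginLaw : MemLp (fun q : ℝ × ℝ => q.1) 2 (marginLaw f) :=
  (memLp_signedLaw hf01 memLp_stdG).comp_fst stdG

lemma memLp_snd_marginLaw : MemLp (fun q : ℝ × ℝ => q.2) 2 (marginLaw f) := by
  have := isProbabilityMeasure_signedLaw hf hf01
  exact memLp_stdG.comp_snd _

lemma memLp_margin (κ a b : ℝ) :
    MemLp (fun q : ℝ × ℝ => κ - a * q.1 - b * q.2) 2 (marginLaw f) := by
  have := isProbabilityMeasure_marginLaw hf hf01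
  exact ((memLp_const κ).sub ((memLp_fst_marginLaw hf01).const_mul a)).sub
    ((memLp_snd_marginLaw hf hf01).const_mul b)

lemma integral_margin_mul {u : ℝ × ℝ → ℝ} (hu : MemLp u 2 (marginLaw f)) (κ a b : ℝ) :
    ∫ q, (κ - a * q.1 - b * q.2) * u q ∂marginLaw f
      = κ * (∫ q, u q ∂marginLaw f) - a * (∫ q, q.1 * u q ∂marginLaw f)
        - b * ∫ q, q.2 * u q ∂marginLaw f := by
  have := isProbabilityMeasure_marginLaw hf hf01
  have hu₀ : Integrable (fun q => κ * u q) (marginLaw f) :=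
    (hu.integrable one_le_two).const_mul κ
  have hu₁ : Integrable (fun q => a * (q.1 * u q)) (marginLaw f) :=
    ((memLp_fst_marginLaw hf01).integrable_mul hu).const_mul a
  have hu₂ : Integrable (fun q => b * (q.2 * u q)) (marginLaw f) :=
    ((memLp_snd_marginLaw hf hf01).integrable_mul hu).const_mul b
  have hu₀₁ : Integrable (fun q => κ * u q - a * (q.1 * u q)) (marginLaw f) := hu₀.sub hu₁
  simp only [sub_mul, mul_assoc]
  rw [integral_sub hu₀₁ hu₂, integral_sub hu₀ hu₁, integral_const_mul, integral_const_mul,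
    integral_const_mul]

lemma Fk_eq_sqrt_integral (κ a b : ℝ) :
    Fk f κ a b = √(∫ q, max (κ - a * q.1 - b * q.2) 0 ^ 2 ∂marginLaw f) := by
  have := isProbabilityMeasure_signedLaw hf hf01
  have hsection (g : ℝ) : Integrable (fun z => max (κ - a * g - b * z) 0 ^ 2) stdG :=
    ((memLp_const (κ - a * g)).sub (memLp_stdG.const_mul b)).pos_part.integrable_sq
  have hjoint : Integrable (fun q : ℝ × ℝ => max (κ - a * q.1 - b * q.2) 0 ^ 2)
      (stdG.prod stdG) :=
    (((memLp_const κ).sub ((memLp_stdG.comp_fst stdG).const_mul a)).sub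
      ((memLp_stdG.comp_snd stdG).const_mul b)).pos_part.integrable_sq
  rw [marginLaw, integral_prod _ (memLp_margin hf hf01 κ a b).pos_part.integrable_sq,
    integral_signedLaw hf hf01 hjoint.integral_prod_left, Fk]
  congr 1
  refine integral_congr_ae (ae_of_all _ fun g => ?_)
  have hneg := hsection (-g)
  simp only [mul_neg, sub_neg_eq_add] at hneg ⊢
  rw [integral_add ((hsection g).const_mul _) (hneg.const_mul _), integral_const_mul,
    integral_const_mul]

lemma marginLaw_setOf_pos_ne_zero (κ a : ℝ) {b : ℝ} (hb : b ≠ 0) :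
    marginLaw f {q | 0 < κ - a * q.1 - b * q.2} ≠ 0 := by
  have := isProbabilityMeasure_signedLaw hf hf01
  intro hnull
  rw [marginLaw, Measure.measure_prod_null (measurableSet_lt (by fun_prop) (by fun_prop))] at hnull
  obtain ⟨t, ht⟩ := hnull.exists
  have hopen : IsOpen {z : ℝ | 0 < κ - a * t - b * z} := isOpen_lt (by fun_prop) (by fun_prop)
  refine (hopen.measure_pos stdG ⟨(κ - a * t - 1) / b, ?_⟩).ne' ht
  simp only [mem_ofPred_eq, mul_div_cancel₀ _ hb, sub_sub_cancel, one_pos]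

end MarginLaw

section Fk

variable {f : ℝ → ℝ} (hf : Measurable f) (hf01 : ∀ x, f x ∈ Set.Icc (0 : ℝ) 1)

include hf hf01

lemma sq_Fk_eq_integral (κ a b : ℝ) :
    Fk f κ a b ^ 2 = ∫ q, max (κ - a * q.1 - b * q.2) 0 ^ 2 ∂marginLaw f := by
  rw [Fk_eq_sqrt_integral hf hf01, Real.sq_sqrt (integral_nonneg fun _ => sq_nonneg _)]

lemma integral_max_margin_pow_pos (κ a : ℝ) {b : ℝ} (hb : b ≠ 0) {n : ℕ}
    (hint : Integrable (fun q => max (κ - a * q.1 - b * q.2) 0 ^ n) (marginLaw f)) :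
    0 < ∫ q, max (κ - a * q.1 - b * q.2) 0 ^ n ∂marginLaw f := by
  rw [integral_pos_iff_support_of_nonneg (fun _ => pow_nonneg (le_max_right _ _) n) hint]
  refine (pos_iff_ne_zero.2 (marginLaw_setOf_pos_ne_zero hf hf01 κ a hb)).trans_le
    (measure_mono fun q hq => ?_)
  exact (pow_pos (lt_max_of_lt_left hq) n).ne'

lemma Fk_pos (κ a : ℝ) {b : ℝ} (hb : b ≠ 0) : 0 < Fk f κ a b := by
  rw [Fk_eq_sqrt_integral hf hf01, Real.sqrt_pos]
  exact integral_max_margin_pow_pos hf hf01 κ a hb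
    (memLp_margin hf hf01 κ a b).pos_part.integrable_sq

lemma integral_margin_mul_max_le (κ a b κ' a' b' : ℝ) :
    κ' * (∫ q, max (κ - a * q.1 - b * q.2) 0 ∂marginLaw f)
        - a' * (∫ q, q.1 * max (κ - a * q.1 - b * q.2) 0 ∂marginLaw f)
        - b' * ∫ q, q.2 * max (κ - a * q.1 - b * q.2) 0 ∂marginLaw f
      ≤ Fk f κ' a' b' * Fk f κ a b := by
  rw [← integral_margin_mul hf hf01 (memLp_margin hf hf01 κ a b).pos_part,
    Fk_eq_sqrt_integral hf hf01, Fk_eq_sqrt_integral hf hf01]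
  exact integral_mul_max_le (memLp_margin hf hf01 κ' a' b') (memLp_margin hf hf01 κ a b)

lemma sq_Fk_eq_sub (κ a b : ℝ) :
    Fk f κ a b ^ 2 = κ * (∫ q, max (κ - a * q.1 - b * q.2) 0 ∂marginLaw f)
        - a * (∫ q, q.1 * max (κ - a * q.1 - b * q.2) 0 ∂marginLaw f)
        - b * ∫ q, q.2 * max (κ - a * q.1 - b * q.2) 0 ∂marginLaw f := by
  rw [← integral_margin_mul hf hf01 (memLp_margin hf hf01 κ a b).pos_part,
    sq_Fk_eq_integral hf hf01]
  simp only [mul_max_zero_eq_sq]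

lemma Fk_lt_Fk {κ κ' : ℝ} (hκ : κ < κ') (a : ℝ) {b : ℝ} (hb : b ≠ 0) :
    Fk f κ a b < Fk f κ' a b := by
  have := isProbabilityMeasure_marginLaw hf hf01
  have hle := integral_margin_mul_max_le hf hf01 κ a b κ' a b
  have hsq := sq_Fk_eq_sub hf hf01 κ a b
  have hint := (memLp_margin hf hf01 κ a b).pos_part.integrable one_le_two
  have hmean := integral_max_margin_pow_pos hf hf01 κ a hb (n := 1) (by simpa only [pow_one])
  simp only [pow_one] at hmean
  refine lt_of_mul_lt_mul_right ?_ (Fk_pos hf hf01 κ a hb).le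
  linarith [mul_pos (sub_pos.2 hκ) hmean]

lemma d1F_mul_Fk (κ a : ℝ) {b : ℝ} (hb : b ≠ 0) :
    d1F f κ a b * Fk f κ a b
      = -∫ q, q.1 * max (κ - a * q.1 - b * q.2) 0 ∂marginLaw f := by
  have := isProbabilityMeasure_marginLaw hf hf01
  have hu : MemLp (fun q : ℝ × ℝ => κ - b * q.2) 2 (marginLaw f) :=
    (memLp_const κ).sub ((memLp_snd_marginLaw hf hf01).const_mul b)
  have hderiv := hasDerivAt_integral_sq_max hu (memLp_fst_marginLaw hf01) a
  simp only [sub_right_comm κ (b * _)] at hderiv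
  have hpos := Fk_pos hf hf01 κ a hb
  have hsqrt := hderiv.sqrt (by rw [← sq_Fk_eq_integral hf hf01]; positivity)
  simp only [← Fk_eq_sqrt_integral hf hf01] at hsqrt
  rw [d1F, hsqrt.deriv, neg_mul, neg_div, mul_div_mul_left _ _ two_ne_zero, neg_mul,
    div_mul_cancel₀ _ hpos.ne']

lemma d2F_mul_Fk (κ a : ℝ) {b : ℝ} (hb : b ≠ 0) :
    d2F f κ a b * Fk f κ a b
      = -∫ q, q.2 * max (κ - a * q.1 - b * q.2) 0 ∂marginLaw f := by
  have := isProbabilityMeasure_marginLaw hf hf01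
  have hu : MemLp (fun q : ℝ × ℝ => κ - a * q.1) 2 (marginLaw f) :=
    (memLp_const κ).sub ((memLp_fst_marginLaw hf01).const_mul a)
  have hderiv := hasDerivAt_integral_sq_max hu (memLp_snd_marginLaw hf hf01) b
  have hpos := Fk_pos hf hf01 κ a hb
  have hsqrt := hderiv.sqrt (by rw [← sq_Fk_eq_integral hf hf01]; positivity)
  simp only [← Fk_eq_sqrt_integral hf hf01] at hsqrt
  rw [d2F, hsqrt.deriv, neg_mul, neg_div, mul_div_mul_left _ _ two_ne_zero, neg_mul,
    div_mul_cancel₀ _ hpos.ne']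

lemma Fk_add_gradient_le (κ a : ℝ) {b : ℝ} (hb : b ≠ 0) (a' b' : ℝ) :
    Fk f κ a b + d1F f κ a b * (a' - a) + d2F f κ a b * (b' - b) ≤ Fk f κ a' b' := by
  refine le_of_mul_le_mul_right ?_ (Fk_pos hf hf01 κ a hb)
  linear_combination integral_margin_mul_max_le hf hf01 κ a b κ a' b' + sq_Fk_eq_sub hf hf01 κ a b
    + (a' - a) * d1F_mul_Fk hf hf01 κ a hb + (b' - b) * d2F_mul_Fk hf hf01 κ a hb

omit hf hf01 in
lemma Fk_neg_right (κ a b : ℝ) : Fk f κ a (-b) = Fk f κ a b := by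
  simp only [Fk]
  congr 2 with g
  rw [← integral_neg_eq_self]
  simp only [neg_mul_neg]

/- By convexity, since `b ↦ F_κ(a, b)` is even. -/
lemma d2F_nonneg (κ a : ℝ) {b : ℝ} (hb : 0 < b) : 0 ≤ d2F f κ a b := by
  have hle := Fk_add_gradient_le hf hf01 κ a hb.ne' a (-b)
  rw [Fk_neg_right] at hle
  exact nonneg_of_mul_nonneg_left (by linarith) hb

lemma sub_mul_integral_fst_le_Fk (κ a b : ℝ) :
    κ - a * (∫ q, q.1 ∂marginLaw f) ≤ Fk f κ a b := by
  have := isProbabilityMeasure_signedLaw hf hf01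
  have := isProbabilityMeasure_marginLaw hf hf01
  have hmean := integral_margin_mul hf hf01 (memLp_const (1 : ℝ)) κ a b
  have hsnd : ∫ q, q.2 ∂marginLaw f = 0 := by
    rw [marginLaw, integral_fun_snd (fun z => z), integral_stdG, smul_zero]
  have hle := integral_mul_max_le (memLp_margin hf hf01 κ a b)
    (memLp_const (μ := marginLaw f) (1 : ℝ))
  simp only [max_eq_left zero_le_one, mul_one, one_pow, integral_const, probReal_univ,
    smul_eq_mul, Real.sqrt_one, hsnd, mul_zero, sub_zero] at hmean hle
  rwa [← hmean, Fk_eq_sqrt_integral hf hf01]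

end Fk

section InnerProduct

variable {P : Measure Pt} {h k : Pt → ℝ}

lemma ip_comm (P : Measure Pt) (h k : Pt → ℝ) : ip P h k = ip P k h := by
  simp only [ip, mul_comm]

lemma ip_smul_right (P : Measure Pt) (c : ℝ) (h k : Pt → ℝ) : ip P h (c • k) = c * ip P h k := by
  simp only [ip, Pi.smul_apply, smul_eq_mul, mul_left_comm _ c, integral_const_mul]

lemma ip_add_right {k' : Pt → ℝ} (hh : MemLp h 2 P) (hk : MemLp k 2 P) (hk' : MemLp k' 2 P) :
    ip P h (k + k') = ip P h k + ip P h k' := by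
  simp only [ip, Pi.add_apply, mul_add]
  exact integral_add (hh.integrable_mul hk) (hh.integrable_mul hk')

lemma ip_self_nonneg (P : Measure Pt) (h : Pt → ℝ) : 0 ≤ ip P h h :=
  integral_nonneg fun _ => mul_self_nonneg _

lemma sq_pnorm (P : Measure Pt) (h : Pt → ℝ) : pnorm P h ^ 2 = ip P h h :=
  Real.sq_sqrt (ip_self_nonneg P h)

lemma pnorm_nonneg (P : Measure Pt) (h : Pt → ℝ) : 0 ≤ pnorm P h := Real.sqrt_nonneg _

lemma ip_le_pnorm_mul_pnorm (hh : MemLp h 2 P) (hk : MemLp k 2 P) :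
    ip P h k ≤ pnorm P h * pnorm P k := by
  simpa only [pnorm, ip, sq] using integral_mul_le_sqrt_mul_sqrt hh hk

lemma abs_ip_le_pnorm_mul_pnorm (hh : MemLp h 2 P) (hk : MemLp k 2 P) :
    |ip P h k| ≤ pnorm P h * pnorm P k := by
  refine abs_le'.2 ⟨ip_le_pnorm_mul_pnorm hh hk, ?_⟩
  simpa only [pnorm, ip, Pi.neg_apply, neg_mul, mul_neg, neg_neg, integral_neg] using
    ip_le_pnorm_mul_pnorm hh.neg hk

lemma memLp_projW (hW : MemLp Wc 2 P) (hh : MemLp h 2 P) : MemLp (projW P h) 2 P :=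
  hh.sub (hW.const_mul _)

lemma ip_projW_right (hW : MemLp Wc 2 P) (hh : MemLp h 2 P) (hk : MemLp k 2 P) :
    ip P h (projW P k) = ip P h k - ip P k Wc * ip P h Wc := by
  have hproj : projW P k = k + (-ip P k Wc) • Wc := by
    ext q
    simp only [projW, Pi.add_apply, Pi.smul_apply, smul_eq_mul]
    ring
  rw [hproj, ip_add_right hh hk (hW.const_smul _), ip_smul_right, neg_mul, ← sub_eq_add_neg]

lemma ip_projW_projW (hW : MemLp Wc 2 P) (hWW : ip P Wc Wc = 1) (hh : MemLp h 2 P)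
    (hk : MemLp k 2 P) :
    ip P (projW P h) (projW P k) = ip P h (projW P k) := by
  rw [ip_comm, ip_projW_right hW (memLp_projW hW hk) hh, ip_comm P (projW P k) Wc,
    ip_projW_right hW hW hk, hWW, mul_one, ip_comm P Wc k, sub_self, mul_zero, sub_zero, ip_comm]

lemma sq_pnorm_projW (hW : MemLp Wc 2 P) (hWW : ip P Wc Wc = 1) (hh : MemLp h 2 P) :
    pnorm P (projW P h) ^ 2 = ip P h h - ip P h Wc ^ 2 := by
  rw [sq_pnorm, ip_projW_projW hW hWW hh hh, ip_projW_right hW hh hh, sq (ip P h Wc)]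

lemma ip_sqrt_Xc_mul (P : Measure Pt) (h k : Pt → ℝ) :
    ip P h (fun q => √(Xc q) * k q) = ip P (fun q => √(Xc q) * h q) k := by
  simp only [ip, mul_left_comm, mul_assoc]

section BoundedX

variable {xmax : ℝ} (hX : ∀ᵐ q ∂P, Xc q ≤ xmax)

include hX

lemma memLp_sqrt_Xc_mul (hh : MemLp h 2 P) : MemLp (fun q => √(Xc q) * h q) 2 P :=
  memLp_sqrt_mul (measurable_fst.comp measurable_snd) hX hh

lemma pnorm_sqrt_Xc_mul_le (hh : MemLp h 2 P) :
    pnorm P (fun q => √(Xc q) * h q) ≤ √xmax * pnorm P h := by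
  refine (sq_le_sq₀ (pnorm_nonneg _ _) (by have := pnorm_nonneg P h; positivity)).1 ?_
  rw [mul_pow, sq_pnorm, sq_pnorm, ip, ip, ← integral_const_mul]
  refine integral_mono_ae ((memLp_sqrt_Xc_mul hX hh).integrable_mul (memLp_sqrt_Xc_mul hX hh))
    ((hh.integrable_mul hh).const_mul _) ?_
  filter_upwards [hX] with q hq
  calc √(Xc q) * h q * (√(Xc q) * h q) = √(Xc q) ^ 2 * (h q * h q) := by ring
    _ ≤ √xmax ^ 2 * (h q * h q) := by gcongr; exact mul_self_nonneg _

end BoundedX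

end InnerProduct

section UnitBall

/-- The unit ball of `L²(P)`, over which `Rfun` is minimized. -/
def unitBall (P : Measure Pt) : Set (Pt → ℝ) := {h | MemLp h 2 P ∧ pnorm P h ≤ 1}

variable {f : ℝ → ℝ} {P : Measure Pt} {xmax ψ κ κ' : ℝ} {h k : Pt → ℝ}

lemma abs_ip_sqrt_Xc_mul_le (hX : ∀ᵐ q ∂P, Xc q ≤ xmax) (hh : h ∈ unitBall P) (hk : MemLp k 2 P) :
    |ip P h (fun q => √(Xc q) * k q)| ≤ √xmax * pnorm P k :=
  calc |ip P h (fun q => √(Xc q) * k q)|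
      ≤ pnorm P h * pnorm P (fun q => √(Xc q) * k q) :=
        abs_ip_le_pnorm_mul_pnorm hh.1 (memLp_sqrt_Xc_mul hX hk)
    _ ≤ pnorm P (fun q => √(Xc q) * k q) := mul_le_of_le_one_left (pnorm_nonneg _ _) hh.2
    _ ≤ √xmax * pnorm P k := pnorm_sqrt_Xc_mul_le hX hk

variable (hf : Measurable f) (hf01 : ∀ x, f x ∈ Set.Icc (0 : ℝ) 1)

include hf hf01

lemma Rfun_lt_Rfun (hψ : 0 < ψ) (hκ : κ < κ')
    (hh : pnorm P (projW P fun q => √(Xc q) * h q) ≠ 0) : Rfun f P ψ κ h < Rfun f P ψ κ' h := by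
  have hF := Fk_lt_Fk hf hf01 hκ (ip P h fun q => √(Xc q) * Wc q) hh
  unfold Rfun
  gcongr

lemma exists_forall_sub_le_Rfun (ψ : ℝ) (hX : ∀ᵐ q ∂P, Xc q ≤ xmax) (hW : MemLp Wc 2 P)
    (hG : MemLp Gc 2 P) : ∃ C, ∀ κ, ∀ h ∈ unitBall P, (√ψ)⁻¹ * κ - C ≤ Rfun f P ψ κ h := by
  let m := ∫ q, q.1 ∂marginLaw f
  refine ⟨(√ψ)⁻¹ * (√xmax * pnorm P Wc * |m|) + √xmax * pnorm P (projW P Gc),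
    fun κ h hh => ?_⟩
  have hmean : ip P h (fun q => √(Xc q) * Wc q) * m ≤ √xmax * pnorm P Wc * |m| :=
    (le_abs_self _).trans <| (abs_mul _ _).trans_le <|
      mul_le_mul_of_nonneg_right (abs_ip_sqrt_Xc_mul_le hX hh hW) (abs_nonneg m)
  have hnoise := (abs_le.1 (abs_ip_sqrt_Xc_mul_le hX hh (memLp_projW hW hG))).1
  have hF := mul_le_mul_of_nonneg_left ((sub_le_sub_left hmean κ).trans
    (sub_mul_integral_fst_le_Fk hf hf01 κ (ip P h fun q => √(Xc q) * Wc q)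
      (pnorm P (projW P fun q => √(Xc q) * h q)))) (inv_nonneg.2 (Real.sqrt_nonneg ψ))
  unfold Rfun
  linarith

end UnitBall

/-- The Karush-Kuhn-Tucker conditions at `h` for minimizing `√ψ • Rfun f P ψ κ` over the unit ball
of `L²(P)`: the constraint `‖h‖² / 2 ≤ 1 / 2` is active with multiplier `√ψ * s`, and `c₁`, `c₂`
are the arguments of `F_κ` at `h`. -/
structure IsKKTPoint (f : ℝ → ℝ) (P : Measure Pt) (ψ κ c₁ c₂ s : ℝ) (h : Pt → ℝ) : Prop where
  memLp : MemLp h 2 P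
  ip_self : ip P h h = 1
  ip_Wc : ip P h (fun q => √(Xc q) * Wc q) = c₁
  pnorm_projW : pnorm P (projW P fun q => √(Xc q) * h q) = c₂
  pos : 0 < c₂
  nonneg : 0 ≤ s
  stationary : ∀ᵐ q ∂P, √(Xc q) * (d1F f κ c₁ c₂ * Wc q
    + c₂⁻¹ * d2F f κ c₁ c₂ * projW P (fun q => √(Xc q) * h q) q
    + √ψ * projW P Gc q) + √ψ * s * h q = 0

namespace IsKKTPoint

variable {f : ℝ → ℝ} {P : Measure Pt} {xmax ψ κ κ' c₁ c₁' c₂ c₂' s s' : ℝ} {h h' u : Pt → ℝ}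

lemma mem_unitBall (hK : IsKKTPoint f P ψ κ c₁ c₂ s h) : h ∈ unitBall P :=
  ⟨hK.memLp, by rw [pnorm, hK.ip_self, Real.sqrt_one]⟩

variable (hX : ∀ᵐ q ∂P, Xc q ≤ xmax) (hG : MemLp Gc 2 P) (hW : MemLp Wc 2 P)
  (hWW : ip P Wc Wc = 1)

include hX hG hW hWW

lemma ip_eq_zero (hK : IsKKTPoint f P ψ κ c₁ c₂ s h) (hu : MemLp u 2 P) :
    d1F f κ c₁ c₂ * ip P u (fun q => √(Xc q) * Wc q)
      + c₂⁻¹ * d2F f κ c₁ c₂ * ip P (projW P fun q => √(Xc q) * u q)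
          (projW P fun q => √(Xc q) * h q)
      + √ψ * ip P u (fun q => √(Xc q) * projW P Gc q) + √ψ * s * ip P u h = 0 := by
  have hXW := memLp_sqrt_Xc_mul hX hW
  have hXh := memLp_sqrt_Xc_mul hX (memLp_projW hW (memLp_sqrt_Xc_mul hX hK.memLp))
  have hXG := memLp_sqrt_Xc_mul hX (memLp_projW hW hG)
  rw [ip_projW_projW hW hWW (memLp_sqrt_Xc_mul hX hu) (memLp_sqrt_Xc_mul hX hK.memLp),
    ← ip_sqrt_Xc_mul, ← ip_smul_right, ← ip_smul_right, ← ip_smul_right, ← ip_smul_right,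
    ← ip_add_right hu (hXW.const_smul _) (hXh.const_smul _),
    ← ip_add_right hu ((hXW.const_smul _).add (hXh.const_smul _)) (hXG.const_smul _),
    ← ip_add_right hu (((hXW.const_smul _).add (hXh.const_smul _)).add (hXG.const_smul _))
      (hK.memLp.const_smul _)]
  refine integral_eq_zero_of_ae ?_
  filter_upwards [hK.stationary] with q hq
  simp only [Pi.add_apply, Pi.smul_apply, smul_eq_mul, Pi.zero_apply]
  linear_combination u q * hq

lemma Rfun_eq_Tval (hK : IsKKTPoint f P ψ κ c₁ c₂ s h) (hψ : 0 < ψ) :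
    Rfun f P ψ κ h = Tval f ψ κ c₁ c₂ s := by
  have hzero := hK.ip_eq_zero hX hG hW hWW hK.memLp
  rw [← sq_pnorm, hK.pnorm_projW, hK.ip_Wc, hK.ip_self] at hzero
  rw [Rfun, hK.pnorm_projW, hK.ip_Wc, Tval]
  have hsqrt := (Real.sqrt_pos.2 hψ).ne'
  field_simp at hzero ⊢
  linear_combination hzero

lemma Tval_le_Rfun (hf : Measurable f) (hf01 : ∀ x, f x ∈ Set.Icc (0 : ℝ) 1)
    (hK : IsKKTPoint f P ψ κ c₁ c₂ s h) (hψ : 0 < ψ) (hh' : h' ∈ unitBall P) :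
    Tval f ψ κ c₁ c₂ s ≤ Rfun f P ψ κ h' := by
  set c₁' := ip P h' fun q => √(Xc q) * Wc q with hc₁'
  set c₂' := pnorm P (projW P fun q => √(Xc q) * h' q) with hc₂'
  have hsqrt := Real.sqrt_pos.2 hψ
  have hzero := hK.ip_eq_zero hX hG hW hWW hh'.1
  have hsmooth : c₂⁻¹ * d2F f κ c₁ c₂ * ip P (projW P fun q => √(Xc q) * h' q)
      (projW P fun q => √(Xc q) * h q) ≤ d2F f κ c₁ c₂ * c₂' := by
    have hle := ip_le_pnorm_mul_pnorm (memLp_projW hW (memLp_sqrt_Xc_mul hX hh'.1))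
      (memLp_projW hW (memLp_sqrt_Xc_mul hX hK.memLp))
    rw [hK.pnorm_projW, ← div_le_iff₀ hK.pos] at hle
    refine (Eq.le ?_).trans (mul_le_mul_of_nonneg_left hle (d2F_nonneg hf hf01 κ c₁ hK.pos))
    rw [div_eq_inv_mul, ← mul_assoc, mul_comm c₂⁻¹]
  have hball : √ψ * s * ip P h' h ≤ √ψ * s := by
    refine mul_le_of_le_one_right (mul_nonneg hsqrt.le hK.nonneg) ?_
    exact (ip_le_pnorm_mul_pnorm hh'.1 hK.memLp).trans
      (mul_le_one₀ hh'.2 (pnorm_nonneg _ _) hK.mem_unitBall.2)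
  have hgrad := Fk_add_gradient_le hf hf01 κ c₁ hK.pos.ne' c₁' c₂'
  rw [Rfun, Tval, ← hc₁', ← hc₂']
  field_simp
  linarith

lemma Tval_lt_Tval (hf : Measurable f) (hf01 : ∀ x, f x ∈ Set.Icc (0 : ℝ) 1) (hψ : 0 < ψ)
    (hK : IsKKTPoint f P ψ κ c₁ c₂ s h) (hK' : IsKKTPoint f P ψ κ' c₁' c₂' s' h') (hκ : κ < κ') :
    Tval f ψ κ c₁ c₂ s < Tval f ψ κ' c₁' c₂' s' :=
  calc Tval f ψ κ c₁ c₂ s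
      ≤ Rfun f P ψ κ h' := hK.Tval_le_Rfun hX hG hW hWW hf hf01 hψ hK'.mem_unitBall
    _ < Rfun f P ψ κ' h' := Rfun_lt_Rfun hf hf01 hψ hκ (hK'.pnorm_projW ▸ hK'.pos.ne')
    _ = Tval f ψ κ' c₁' c₂' s' := hK'.Rfun_eq_Tval hX hG hW hWW hψ

end IsKKTPoint

/-- The law of `(G, X, W)` for a standard Gaussian `G` independent of `(X, W) ~ μ`. -/
def jointLaw (μ : Measure (ℝ × ℝ)) : Measure Pt := stdG.prod μ

/-- The random variable `a(X, W) G + b(X, W)`. Such variables are closed under multiplication by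
functions of `(X, W)`, and they include `G`, `W` and the minimizer of `Rfun`; integrating out `G`
reduces their inner products to integrals over `μ`. -/
def gaussianAffine (a b : ℝ × ℝ → ℝ) : Pt → ℝ := fun q => a q.2 * Gc q + b q.2

section JointLaw

lemma Gc_eq_gaussianAffine : Gc = gaussianAffine (fun _ => 1) fun _ => 0 := by
  ext q
  simp only [gaussianAffine, one_mul, add_zero]

lemma Wc_eq_gaussianAffine : Wc = gaussianAffine (fun _ => 0) Prod.snd := by
  ext q
  simp only [gaussianAffine, Wc, zero_mul, zero_add]

lemma sqrt_mul_gaussianAffine (a b : ℝ × ℝ → ℝ) :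
    (fun q => √(Xc q) * gaussianAffine a b q)
      = gaussianAffine (fun q => √q.1 * a q) (fun q => √q.1 * b q) := by
  ext q
  simp only [gaussianAffine, Xc, mul_add, mul_assoc]

variable {μ : Measure (ℝ × ℝ)} [IsProbabilityMeasure μ] {a b a' b' : ℝ × ℝ → ℝ}

lemma memLp_gaussianAffine (ha : MemLp a 2 μ) (hb : MemLp b 2 μ) :
    MemLp (gaussianAffine a b) 2 (jointLaw μ) := by
  have haG : MemLp (fun q => a q.2 * Gc q) 2 (jointLaw μ) := by
    refine (memLp_two_iff_integrable_sq ?_).2 ?_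
    · exact (ha.1.comp_snd (μ := stdG)).mul measurable_fst.aestronglyMeasurable
    · have hsq : Integrable (fun q : Pt => q.1 ^ 2 * a q.2 ^ 2) (jointLaw μ) :=
        memLp_stdG.integrable_sq.mul_prod ha.integrable_sq
      simpa only [mul_pow, Gc, mul_comm] using hsq
  exact haG.add (hb.comp_snd stdG)

lemma ip_gaussianAffine (ha : MemLp a 2 μ) (hb : MemLp b 2 μ) (ha' : MemLp a' 2 μ)
    (hb' : MemLp b' 2 μ) :
    ip (jointLaw μ) (gaussianAffine a b) (gaussianAffine a' b')
      = ∫ q, (a q * a' q + b q * b' q) ∂μ := by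
  have hint : Integrable (fun q : Pt => gaussianAffine a b q * gaussianAffine a' b' q)
      (stdG.prod μ) := (memLp_gaussianAffine ha hb).integrable_mul (memLp_gaussianAffine ha' hb')
  rw [ip, jointLaw, integral_prod_symm _ hint]
  simp only [gaussianAffine, Gc, integral_affine_mul_affine_stdG]

lemma memLp_Gc_jointLaw : MemLp Gc 2 (jointLaw μ) := memLp_stdG.comp_fst μ

lemma memLp_Wc_jointLaw (hw : MemLp Prod.snd 2 μ) : MemLp Wc 2 (jointLaw μ) := hw.comp_snd stdG

lemma ip_Wc_Wc_jointLaw (hw2 : ∫ q, q.2 ^ 2 ∂μ = 1) : ip (jointLaw μ) Wc Wc = 1 := by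
  rw [ip, jointLaw, ← hw2]
  simp only [sq]
  exact (integral_fun_snd fun q : ℝ × ℝ => q.2 * q.2).trans (by rw [probReal_univ, one_smul])

lemma projW_Gc_jointLaw (hw : MemLp Prod.snd 2 μ) : projW (jointLaw μ) Gc = Gc := by
  have horth : ip (jointLaw μ) Gc Wc = 0 := by
    rw [Gc_eq_gaussianAffine, Wc_eq_gaussianAffine,
      ip_gaussianAffine (memLp_const 1) (memLp_const 0) (memLp_const 0) hw]
    simp only [mul_zero, zero_mul, add_zero, integral_zero]
  ext q
  rw [projW, horth, zero_mul, sub_zero]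

end JointLaw

/-- The denominator `D` of the system of equations at `X = x`, with `α = c₂⁻¹ ∂₂F_κ(c₁, c₂)` and
`β = ψ^{1/2} s`. -/
def sysDenom (α β x : ℝ) : ℝ := α * √x + β * (√x)⁻¹

/-- The random variable `-(ψ^{1/2} G + A W) / D`, which solves the stationarity equation of
`IsKKTPoint` and is hence the minimizer of `Rfun` over the unit ball. -/
def optimizer (ψ A α β : ℝ) : Pt → ℝ :=
  gaussianAffine (fun q => (sysDenom α β q.1)⁻¹ * -√ψ) fun q => (sysDenom α β q.1)⁻¹ * -(A * q.2)

section Optimizer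

open scoped ENNReal

variable {α β x xmax : ℝ}

lemma sqrt_mul_sysDenom (hx : 0 < x) : √x * sysDenom α β x = α * √x * √x + β := by
  rw [sysDenom]
  linear_combination β * mul_inv_cancel₀ (Real.sqrt_pos.2 hx).ne'

variable (hα : 0 ≤ α) (hβ : 0 < β)

include hα hβ

lemma sysDenom_pos (hx : 0 < x) : 0 < sysDenom α β x := by
  unfold sysDenom
  positivity

lemma sysDenom_mul_optimizer (ψ A : ℝ) {q : Pt} (hq : 0 < Xc q) :
    sysDenom α β (Xc q) * optimizer ψ A α β q = -(√ψ * Gc q + A * Wc q) := by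
  have hcancel := mul_inv_cancel₀ (sysDenom_pos hα hβ hq).ne'
  change _ * ((sysDenom α β (Xc q))⁻¹ * -√ψ * Gc q + (sysDenom α β (Xc q))⁻¹ * -(A * Wc q)) = _
  linear_combination -(√ψ * Gc q + A * Wc q) * hcancel

lemma inv_sysDenom_le (hx : x ∈ Set.Ioc 0 xmax) : (sysDenom α β x)⁻¹ ≤ √xmax / β := by
  have hsqrt := Real.sqrt_pos.2 hx.1
  have hsqrtmax := Real.sqrt_le_sqrt hx.2
  rw [← inv_div]
  refine inv_anti₀ (div_pos hβ (hsqrt.trans_le hsqrtmax)) ?_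
  calc β / √xmax ≤ β / √x := by gcongr
    _ ≤ sysDenom α β x := le_add_of_nonneg_left (mul_nonneg hα hsqrt.le)

variable {μ : Measure (ℝ × ℝ)} (hX : ∀ᵐ q ∂μ, q.1 ∈ Set.Ioc 0 xmax)

include hX

lemma memLp_top_inv_sysDenom : MemLp (fun q : ℝ × ℝ => (sysDenom α β q.1)⁻¹) ∞ μ := by
  refine memLp_top_of_bound (by unfold sysDenom; fun_prop) (√xmax / β) ?_
  filter_upwards [hX] with q hq
  rw [Real.norm_of_nonneg (inv_nonneg.2 (sysDenom_pos hα hβ hq.1).le)]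
  exact inv_sysDenom_le hα hβ hq

lemma memLp_inv_sysDenom_mul {u : ℝ × ℝ → ℝ} (hu : MemLp u 2 μ) :
    MemLp (fun q => (sysDenom α β q.1)⁻¹ * u q) 2 μ :=
  hu.mul' (memLp_top_inv_sysDenom hα hβ hX)

variable [IsProbabilityMeasure μ] (hw : MemLp Prod.snd 2 μ)

include hw

lemma memLp_optimizer (ψ A : ℝ) : MemLp (optimizer ψ A α β) 2 (jointLaw μ) :=
  memLp_gaussianAffine (memLp_inv_sysDenom_mul hα hβ hX (memLp_const _))
    (memLp_inv_sysDenom_mul hα hβ hX (hw.const_mul A).neg)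

lemma ip_optimizer_self {ψ : ℝ} (hψ : 0 ≤ ψ) (A : ℝ) :
    ip (jointLaw μ) (optimizer ψ A α β) (optimizer ψ A α β)
      = ∫ q, (ψ + A ^ 2 * q.2 ^ 2) / sysDenom α β q.1 ^ 2 ∂μ := by
  have hp := memLp_inv_sysDenom_mul hα hβ hX (memLp_const (-√ψ))
  have hr := memLp_inv_sysDenom_mul hα hβ hX (hw.const_mul A).neg
  refine (ip_gaussianAffine hp hr hp hr).trans ?_
  congr with q
  simp only [Pi.neg_apply, div_eq_mul_inv, ← inv_pow]
  linear_combination (sysDenom α β q.1)⁻¹ ^ 2 * Real.sq_sqrt hψ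

lemma ip_optimizer_sqrt_mul_Wc (ψ A : ℝ) :
    ip (jointLaw μ) (optimizer ψ A α β) (fun q => √(Xc q) * Wc q)
      = -∫ q, A * q.2 ^ 2 * √q.1 / sysDenom α β q.1 ∂μ := by
  have hp := memLp_inv_sysDenom_mul hα hβ hX (memLp_const (-√ψ))
  have hr := memLp_inv_sysDenom_mul hα hβ hX (hw.const_mul A).neg
  have hle := hX.mono fun _ hq => hq.2
  rw [Wc_eq_gaussianAffine, sqrt_mul_gaussianAffine, ← integral_neg]
  refine (ip_gaussianAffine hp hr (memLp_sqrt_mul measurable_fst hle (memLp_const 0))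
    (memLp_sqrt_mul measurable_fst hle hw)).trans ?_
  congr with q
  simp only [Pi.neg_apply, div_eq_mul_inv]
  ring

lemma ip_sqrt_mul_optimizer_self {ψ : ℝ} (hψ : 0 ≤ ψ) (A : ℝ) :
    ip (jointLaw μ) (fun q => √(Xc q) * optimizer ψ A α β q)
        (fun q => √(Xc q) * optimizer ψ A α β q)
      = ∫ q, (ψ * q.1 + A ^ 2 * q.2 ^ 2 * q.1) / sysDenom α β q.1 ^ 2 ∂μ := by
  have hle := hX.mono fun _ hq => hq.2
  have hp := memLp_sqrt_mul measurable_fst hle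
    (memLp_inv_sysDenom_mul hα hβ hX (memLp_const (-√ψ)))
  have hr := memLp_sqrt_mul measurable_fst hle
    (memLp_inv_sysDenom_mul hα hβ hX (hw.const_mul A).neg)
  rw [optimizer, sqrt_mul_gaussianAffine]
  refine (ip_gaussianAffine hp hr hp hr).trans (integral_congr_ae ?_)
  filter_upwards [hX] with q hq
  simp only [Pi.neg_apply, div_eq_mul_inv, ← inv_pow]
  linear_combination (sysDenom α β q.1)⁻¹ ^ 2
    * (√q.1 ^ 2 * Real.sq_sqrt hψ + (ψ + A ^ 2 * q.2 ^ 2) * Real.sq_sqrt hq.1.le)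

end Optimizer

theorem SolSysMu.exists_isKKTPoint {f : ℝ → ℝ} (hf : Measurable f)
    (hf01 : ∀ x, f x ∈ Set.Icc (0 : ℝ) 1) {μ : Measure (ℝ × ℝ)} [IsProbabilityMeasure μ]
    {xmax : ℝ} (hX : ∀ᵐ q ∂μ, q.1 ∈ Set.Ioc 0 xmax) (hw : MemLp Prod.snd 2 μ)
    (hWW : ip (jointLaw μ) Wc Wc = 1) {ψ κ c₁ c₂ s : ℝ} (hψ : 0 < ψ) (hc₂ : 0 < c₂) (hs : 0 < s)
    (hsol : SolSysMu f μ ψ κ c₁ c₂ s) : ∃ h, IsKKTPoint f (jointLaw μ) ψ κ c₁ c₂ s h := by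
  set A := d1F f κ c₁ c₂ - c₁ * c₂⁻¹ * d2F f κ c₁ c₂ with hA
  set α := c₂⁻¹ * d2F f κ c₁ c₂ with hα_def
  have hα : 0 ≤ α := mul_nonneg (inv_nonneg.2 hc₂.le) (d2F_nonneg hf hf01 κ c₁ hc₂)
  have hβ : 0 < √ψ * s := mul_pos (Real.sqrt_pos.2 hψ) hs
  have hX' : ∀ᵐ q ∂jointLaw μ, Xc q ∈ Set.Ioc 0 xmax := Measure.quasiMeasurePreserving_snd.ae hX
  have hh := memLp_optimizer hα hβ hX hw ψ A
  have hip : ip (jointLaw μ) (optimizer ψ A α (√ψ * s)) (fun q => √(Xc q) * Wc q) = c₁ := by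
    rw [ip_optimizer_sqrt_mul_Wc hα hβ hX hw]
    exact neg_eq_iff_eq_neg.2 hsol.1.symm
  have hipX := (ip_sqrt_Xc_mul _ _ _).symm.trans hip
  refine ⟨optimizer ψ A α (√ψ * s), hh, ?_, hip, ?_, hc₂, hs.le, ?_⟩
  · rw [ip_optimizer_self hα hβ hX hw hψ.le]
    exact hsol.2.2.symm
  · refine (sq_eq_sq₀ (pnorm_nonneg _ _) hc₂.le).1 ?_
    rw [sq_pnorm_projW (memLp_Wc_jointLaw hw) hWW
      (memLp_sqrt_Xc_mul (hX'.mono fun _ hq => hq.2) hh), hipX,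
      ip_sqrt_mul_optimizer_self hα hβ hX hw hψ.le]
    exact sub_eq_of_eq_add' hsol.2.1.symm
  · filter_upwards [hX'] with q hq
    have hdenom := sqrt_mul_sysDenom (α := α) (β := √ψ * s) hq.1
    have hmul := sysDenom_mul_optimizer hα hβ ψ A hq.1
    rw [projW, hipX, projW_Gc_jointLaw hw]
    linear_combination √(Xc q) * hmul - optimizer ψ A α (√ψ * s) q * hdenom
      - √(Xc q) * Wc q * hA - √(Xc q) * Wc q * c₁ * hα_def

theorem statement_9_general {f : ℝ → ℝ} (hf : Measurable f) (hf01 : ∀ x, f x ∈ Set.Icc (0 : ℝ) 1)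
    {μ : Measure (ℝ × ℝ)} [IsProbabilityMeasure μ] {xmax : ℝ}
    (hX : ∀ᵐ q ∂μ, q.1 ∈ Set.Ioc 0 xmax) (hw2 : ∫ q, q.2 ^ 2 ∂μ = 1) {ψ : ℝ} (hψ : 0 < ψ)
    (S : Set ℝ) (sol : ℝ → ℝ × ℝ × ℝ)
    (hsol : ∀ κ ∈ S, 0 < (sol κ).2.1 ∧ 0 < (sol κ).2.2
      ∧ SolSysMu f μ ψ κ (sol κ).1 (sol κ).2.1 (sol κ).2.2) :
    StrictMonoOn (fun κ => Tval f ψ κ (sol κ).1 (sol κ).2.1 (sol κ).2.2) S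
      ∧ Tendsto (fun κ => Tval f ψ κ (sol κ).1 (sol κ).2.1 (sol κ).2.2) (atTop ⊓ 𝓟 S) atTop := by
  have hw : MemLp Prod.snd 2 μ := (memLp_two_iff_integrable_sq (by fun_prop)).2
    (.of_integral_ne_zero (hw2.trans_ne one_ne_zero))
  have hWW := ip_Wc_Wc_jointLaw hw2
  have hW := memLp_Wc_jointLaw hw
  have hG := memLp_Gc_jointLaw (μ := μ)
  have hle : ∀ᵐ q ∂jointLaw μ, Xc q ≤ xmax :=
    Measure.quasiMeasurePreserving_snd.ae (hX.mono fun _ hq => hq.2)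
  have hKKT : ∀ κ ∈ S, ∃ h,
      IsKKTPoint f (jointLaw μ) ψ κ (sol κ).1 (sol κ).2.1 (sol κ).2.2 h := fun κ hκ =>
    (hsol κ hκ).2.2.exists_isKKTPoint hf hf01 hX hw hWW hψ (hsol κ hκ).1 (hsol κ hκ).2.1
  refine ⟨fun κ hκ κ' hκ' hlt => ?_, ?_⟩
  · obtain ⟨h, hK⟩ := hKKT κ hκ
    obtain ⟨h', hK'⟩ := hKKT κ' hκ'
    exact hK.Tval_lt_Tval hle hG hW hWW hf hf01 hψ hK' hlt
  · obtain ⟨C, hC⟩ := exists_forall_sub_le_Rfun hf hf01 ψ hle hW hG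
    have hlin : Tendsto (fun κ => (√ψ)⁻¹ * κ - C) atTop atTop := tendsto_atTop_add_const_right _ _
      (tendsto_id.const_mul_atTop (inv_pos.2 (Real.sqrt_pos.2 hψ)))
    refine tendsto_atTop_mono' _ (eventually_inf_principal.2 (.of_forall fun κ hκ => ?_))
      (hlin.mono_left inf_le_left)
    obtain ⟨h, hK⟩ := hKKT κ hκ
    exact (hC κ h hK.mem_unitBall).trans_eq (hK.Rfun_eq_Tval hle hG hW hWW hψ)

/-- For fixed `ψ > 0`, the map `κ ↦ T(ψ,κ)` is strictly increasing on
`{κ > 0 : ψ > ψ↓(κ)}`, and `T(ψ,κ) → ∞` as `κ → ∞` (along that domain). -/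
theorem statement_9 (f : ℝ → ℝ) (hf : Continuous f) (hf01 : ∀ x, f x ∈ Set.Icc (0:ℝ) 1)
    (ρ : ℝ) (hρ : 0 < ρ) (hnd : NonDeg (fun x => f (ρ * x)))
    (μ : Measure (ℝ × ℝ)) [IsProbabilityMeasure μ]
    (xmin xmax : ℝ) (hxmin : 0 < xmin) (hxx : xmin ≤ xmax)
    (hsupp : ∀ᵐ q ∂μ, q.1 ∈ Set.Icc xmin xmax)
    (hw2 : ∫ q, q.2 ^ 2 ∂μ = 1)
    (ψ : ℝ) (hψ : 0 < ψ)
    (sol : ℝ → ℝ × ℝ × ℝ)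
    (hsol : ∀ κ : ℝ, 0 < κ → psiDown (fun x => f (ρ * x)) μ κ < ψ →
      0 < (sol κ).2.1 ∧ 0 < (sol κ).2.2
        ∧ SolSysMu (fun x => f (ρ * x)) μ ψ κ (sol κ).1 (sol κ).2.1 (sol κ).2.2
        ∧ ∀ c₁ c₂ s : ℝ, 0 < c₂ → 0 < s →
            SolSysMu (fun x => f (ρ * x)) μ ψ κ c₁ c₂ s → (c₁, c₂, s) = sol κ) :
    StrictMonoOn (fun κ : ℝ =>
        Tval (fun x => f (ρ * x)) ψ κ (sol κ).1 (sol κ).2.1 (sol κ).2.2)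
      {κ : ℝ | 0 < κ ∧ psiDown (fun x => f (ρ * x)) μ κ < ψ}
    ∧ Tendsto (fun κ : ℝ =>
        Tval (fun x => f (ρ * x)) ψ κ (sol κ).1 (sol κ).2.1 (sol κ).2.2)
      (atTop ⊓ Filter.principal {κ : ℝ | 0 < κ ∧ psiDown (fun x => f (ρ * x)) μ κ < ψ})
      atTop :=
  statement_9_general (hf.comp (continuous_const_mul ρ)).measurable (fun x => hf01 (ρ * x))
    (hsupp.mono fun _ hq => ⟨hxmin.trans_le hq.1, hq.2⟩) hw2 hψ _ sol
    fun κ hκ => ⟨(hsol κ hκ.1 hκ.2).1, (hsol κ hκ.1 hκ.2).2.1, (hsol κ hκ.1 hκ.2).2.2.1⟩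

end MaxMargin
end
end

section
/- For every t ∈ ℝ and every nonempty compact set Θ ⊆ ℝ^p the following inequalities hold: P(ξ⁽⁰⁾ ≤ t) ≤ 2·P(ξ⁽¹⁾ ≤ t), P(ξ⁽⁰⁾ ≥ t) ≤ 2·P(ξ⁽¹⁾ ≥ t), and P(ξ⁽⁰⁾(Θ) ≤ t) ≤ 2·P(ξ⁽¹⁾(Θ) ≤ t). Moreover, if Θ is in addition convex, then also P(ξ⁽⁰⁾(Θ) ≥ t) ≤ 2·P(ξ⁽¹⁾(Θ) ≥ t). -/
open MeasureTheory ProbabilityTheory Real Filter Set Topology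

noncomputable section

namespace MaxMargin

/-- The Euclidean (ℓ²) norm of a finitely-indexed vector. -/
def l2 {ι : Type*} [Fintype ι] (v : ι → ℝ) : ℝ := Real.sqrt (∑ i, v i ^ 2)

/-- Standard Gaussian measure on `ι → ℝ`. -/
def stdGaussianPi (ι : Type*) [Fintype ι] : Measure (ι → ℝ) :=
  Measure.pi fun _ : ι => stdG

/-- The law of a `{+1,−1}`-valued variable taking the value `+1` with probability `q`. -/
def signBer (q : ℝ) : Measure ℝ :=
  ENNReal.ofReal q • Measure.dirac (1 : ℝ) + ENNReal.ofReal (1 - q) • Measure.dirac (-1 : ℝ)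

/-- Projection of `v` orthogonal to the unit vector `w`: `Π_{w⊥}v = v − ⟨w,v⟩w`. -/
def projv {ι : Type*} [Fintype ι] (w v : ι → ℝ) : ι → ℝ :=
  fun j => v j - (∑ k, w k * v k) * w j

/-- The dual feasible set `{λ : ‖λ‖₂ ≤ 1, yᵢλᵢ ≥ 0 ∀i}`. -/
def lamSet (n : ℕ) (yv : Fin n → ℝ) : Set (Fin n → ℝ) :=
  {lam : Fin n → ℝ | l2 lam ≤ 1 ∧ ∀ i, 0 ≤ yv i * lam i}

/-- `ξ⁽⁰⁾(Θ)` evaluated at the data `(M, y)`: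
`min_{θ∈Θ} max_{‖λ‖≤1, y⊙λ≥0} p^{−1/2}·λᵀ(κy − X̄Λ^{1/2}θ)`. -/
def xi0 (n p : ℕ) (κ : ℝ) (Λ : Fin p → ℝ) (Θ : Set (Fin p → ℝ))
    (M : Fin n → Fin p → ℝ) (yv : Fin n → ℝ) : ℝ :=
  sInf ((fun θ => sSup ((fun lam => (Real.sqrt (p : ℝ))⁻¹ *
      ∑ i, lam i * (κ * yv i - ∑ j, M i j * Real.sqrt (Λ j) * θ j)) '' lamSet n yv)) '' Θ)

/-- `ξ⁽¹⁾(Θ)` evaluated at `(g, h, u, y)`: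
`min_{θ∈Θ} max_{‖λ‖≤1, y⊙λ≥0} p^{−1/2}( λᵀ(κy − ⟨Λ^{1/2}w,θ⟩u − ‖Π_{w⊥}Λ^{1/2}θ‖₂h)
+ ‖λ‖₂·gᵀΠ_{w⊥}Λ^{1/2}θ )`. -/
def xi1 (n p : ℕ) (κ : ℝ) (Λ w : Fin p → ℝ) (Θ : Set (Fin p → ℝ))
    (g : Fin p → ℝ) (h u yv : Fin n → ℝ) : ℝ :=
  sInf ((fun θ => sSup ((fun lam => (Real.sqrt (p : ℝ))⁻¹ *
      ((∑ i, lam i * (κ * yv i - (∑ j, Real.sqrt (Λ j) * w j * θ j) * u i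
          - l2 (projv w (fun j => Real.sqrt (Λ j) * θ j)) * h i))
        + l2 lam * ∑ j, g j * projv w (fun j' => Real.sqrt (Λ j') * θ j') j))
      '' lamSet n yv)) '' Θ)

/-- Joint law of `(X̄, y)` in the primary model: `X̄` has i.i.d. `N(0,1)` entries and,
conditionally on `X̄`, the labels are independent with `P(yᵢ = +1 | X̄) = f(ρ⟨w, x̄ᵢ⟩)`. -/
def mu0 (n p : ℕ) (f : ℝ → ℝ) (ρ : ℝ) (w : Fin p → ℝ) :
    Measure ((Fin n → Fin p → ℝ) × (Fin n → ℝ)) :=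
  (Measure.pi fun _ : Fin n => stdGaussianPi (Fin p)).bind fun M =>
    (Measure.pi fun i : Fin n => signBer (f (ρ * ∑ j, w j * M i j))).map fun yv => (M, yv)

/-- Joint law of `(g, h, u, y)` in the auxiliary model: `g, h, u` independent standard
Gaussians and, conditionally on `u`, the labels are independent with
`P(yᵢ = +1 | u) = f(ρ·uᵢ)`. -/
def mu1 (n p : ℕ) (f : ℝ → ℝ) (ρ : ℝ) :
    Measure ((Fin p → ℝ) × (Fin n → ℝ) × (Fin n → ℝ) × (Fin n → ℝ)) :=
  ((stdGaussianPi (Fin p)).prod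
      ((stdGaussianPi (Fin n)).prod (stdGaussianPi (Fin n)))).bind fun ghu =>
    (Measure.pi fun i : Fin n => signBer (f (ρ * ghu.2.2 i))).map fun yv =>
      (ghu.1, ghu.2.1, ghu.2.2, yv)

/-
Decompose `X̄ = u wᵀ + G Π_{w⊥}` with `u = X̄w` and `G` a fresh Gaussian matrix: the labels depend
on `X̄` only through `u`, so conditionally on `(u, y)` the primary problem is the min-max of a
deterministic term minus a Gaussian bilinear form. Gordon's inequality, obtained by interpolating
between two Gaussian processes as Kahane does, compares
`−λᵀGΠ_{w⊥}Λ^{1/2}θ + z ‖λ‖ ‖Π_{w⊥}Λ^{1/2}θ‖` with the auxiliary form; the extra Gaussian `z` has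
the right sign with probability at least `1/2`, independently of `G`, whence the factor `2`.
Gordon's inequality controls only `min max ≤ t`; for convex `Θ` Sion's minimax theorem exchanges
`min` and `max`, which gives the opposite inequality.
-/

/-! ### Gaussian integration by parts -/

section Stein

instance (ι : Type*) [Fintype ι] : IsProbabilityMeasure (stdGaussianPi ι) := by
  unfold stdGaussianPi; infer_instance

lemma hasDerivAt_gaussianPDFReal_std (x : ℝ) :
    HasDerivAt (gaussianPDFReal 0 1) (-(x * gaussianPDFReal 0 1 x)) x := by
  have hexp : HasDerivAt (fun x : ℝ => Real.exp (-x ^ 2 / 2)) (Real.exp (-x ^ 2 / 2) * -x) x := by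
    convert! ((hasDerivAt_pow 2 x).fun_neg.div_const 2).exp using 1
    ring
  convert! hexp.const_mul (√(2 * π))⁻¹ using 1
  · ext y
    simp [gaussianPDFReal]
  · simp only [gaussianPDFReal, NNReal.coe_one, mul_one, sub_zero]
    ring

lemma integrable_id_stdG : Integrable id stdG :=
  memLp_one_iff_integrable.1 (memLp_id_gaussianReal 1)

lemma integral_stdG_eq (G : ℝ → ℝ) : ∫ x, G x ∂stdG = ∫ x, G x * gaussianPDFReal 0 1 x := by
  simp [stdG, integral_gaussianReal_eq_integral_smul, mul_comm]

lemma integrable_stdG_iff {G : ℝ → ℝ} :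
    Integrable G stdG ↔ Integrable (fun x => G x * gaussianPDFReal 0 1 x) := by
  rw [stdG, gaussianReal_of_var_ne_zero _ one_ne_zero,
    integrable_withDensity_iff_integrable_smul' (by fun_prop) (by simp [gaussianPDF])]
  simp [gaussianPDF, gaussianPDFReal_nonneg, mul_comm]

lemma integral_id_mul_stdG {G : ℝ → ℝ} (hG : ContDiff ℝ 1 G) {C C' : ℝ}
    (hC : ∀ x, |G x| ≤ C) (hC' : ∀ x, |deriv G x| ≤ C') :
    ∫ x, x * G x ∂stdG = ∫ x, deriv G x ∂stdG := by
  have hG_int : Integrable G stdG :=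
    .of_bound hG.continuous.aestronglyMeasurable C (ae_of_all _ hC)
  have hderiv_int : Integrable (deriv G) stdG :=
    .of_bound hG.continuous_deriv_one.aestronglyMeasurable C' (ae_of_all _ hC')
  have hmul_int : Integrable (fun x => x * G x) stdG :=
    integrable_id_stdG.mul_bdd hG.continuous.aestronglyMeasurable (ae_of_all _ hC)
  rw [integrable_stdG_iff] at hG_int hderiv_int hmul_int
  have key := integral_mul_deriv_eq_deriv_mul_of_integrable
    (fun x _ => (hG.differentiable one_ne_zero x).hasDerivAt)
    (fun x _ => hasDerivAt_gaussianPDFReal_std x)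
    (by refine hmul_int.neg.congr (ae_of_all _ fun x => ?_)
        simp only [Pi.neg_apply, Pi.mul_apply]
        ring) hderiv_int hG_int
  rw [integral_stdG_eq, integral_stdG_eq, ← neg_inj, ← key, ← integral_neg]
  congr with x
  ring

lemma measurePreserving_update {ι : Type*} [Fintype ι] [DecidableEq ι] {X : ι → Type*}
    [∀ i, MeasurableSpace (X i)] (μ : ∀ i, Measure (X i)) [∀ i, SigmaFinite (μ i)] (k : ι)
    [IsProbabilityMeasure (μ k)] :
    MeasurePreserving (fun q : (∀ i, X i) × X k => Function.update q.1 k q.2)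
      ((Measure.pi μ).prod (μ k)) (Measure.pi μ) := by
  have hmeas : Measurable fun q : (∀ i, X i) × X k => Function.update q.1 k q.2 :=
    measurable_update'
  refine ⟨hmeas, (Measure.pi_eq fun s hs => ?_).symm⟩
  have hpre : (fun q : (∀ i, X i) × X k => Function.update q.1 k q.2) ⁻¹' (Set.univ.pi s)
      = (Set.univ.pi (Function.update s k Set.univ)) ×ˢ s k := by
    ext ⟨z, x⟩
    simp only [Set.mem_preimage, Set.mem_univ_pi, Set.mem_prod,
      Function.forall_update_iff z fun i y => y ∈ s i,
      Function.forall_update_iff s fun i t => z i ∈ t, Set.mem_univ, true_and]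
    tauto
  rw [Measure.map_apply hmeas (.univ_pi hs), hpre, Measure.prod_prod, Measure.pi_pi,
    ← Finset.mul_prod_erase _ _ (Finset.mem_univ k),
    ← Finset.mul_prod_erase _ (fun i => μ i (s i)) (Finset.mem_univ k), Function.update_self,
    measure_univ, one_mul, mul_comm]
  congr 1
  exact Finset.prod_congr rfl fun i hi => by rw [Function.update_of_ne (Finset.ne_of_mem_erase hi)]

variable {I : Type*} [Fintype I]

lemma integrable_eval_stdGaussianPi (k : I) :
    Integrable (fun z : I → ℝ => z k) (stdGaussianPi I) :=
  integrable_eval (μ := fun _ => stdG) integrable_id_stdG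

theorem integral_eval_mul_stdGaussianPi [DecidableEq I] {G : (I → ℝ) → ℝ} (hG : ContDiff ℝ 1 G)
    {C C' : ℝ} (hC : ∀ z, |G z| ≤ C) (k : I)
    (hC' : ∀ z, |fderiv ℝ G z (Pi.single k 1)| ≤ C') :
    ∫ z, z k * G z ∂stdGaussianPi I = ∫ z, fderiv ℝ G z (Pi.single k 1) ∂stdGaussianPi I := by
  have hcont : Continuous fun z => fderiv ℝ G z (Pi.single k 1) := by fun_prop
  have hmul_int : Integrable (fun z => z k * G z) (stdGaussianPi I) :=
    (integrable_eval_stdGaussianPi k).mul_bdd hG.continuous.aestronglyMeasurable (ae_of_all _ hC)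
  have hderiv_int : Integrable (fun z => fderiv ℝ G z (Pi.single k 1)) (stdGaussianPi I) :=
    .of_bound hcont.aestronglyMeasurable C' (ae_of_all _ hC')
  have hderiv (z : I → ℝ) (x : ℝ) : deriv (fun x => G (Function.update z k x)) x
      = fderiv ℝ G (Function.update z k x) (Pi.single k 1) :=
    (((hG.differentiable one_ne_zero _).hasFDerivAt).comp_hasDerivAt x
      (hasDerivAt_update z k x)).deriv
  have hupd : MeasurePreserving (fun q : (I → ℝ) × ℝ => Function.update q.1 k q.2)
      ((stdGaussianPi I).prod stdG) (stdGaussianPi I) :=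
    measurePreserving_update (fun _ : I => stdG) k
  rw [← hupd.map_eq] at hmul_int hderiv_int ⊢
  rw [integral_map hupd.aemeasurable hmul_int.1, integral_map hupd.aemeasurable hderiv_int.1]
  refine (integral_prod _ (hmul_int.comp_measurable hupd.measurable)).trans
    (Eq.trans ?_ (integral_prod _ (hderiv_int.comp_measurable hupd.measurable)).symm)
  congr with z
  simp only [Function.comp_apply, Function.update_self, ← hderiv]
  exact integral_id_mul_stdG (hG.comp (contDiff_update 1 z k)) (fun x => hC _)
    fun x => hderiv z x ▸ hC' _

end Stein

/-! ### Kahane's interpolation inequality -/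

section Interpolation

variable {V : Type*} [NormedAddCommGroup V] [NormedSpace ℝ V] {F : V → ℝ} {C₁ C₂ : ℝ}
  {I : Type*} [Fintype I]

lemma integral_eval_mul_fderiv_affine (hF : ContDiff ℝ 2 F) (hF₁ : ∀ x, ‖fderiv ℝ F x‖ ≤ C₁)
    (hF₂ : ∀ x, ‖fderiv ℝ (fderiv ℝ F) x‖ ≤ C₂) (ψ v : V) (c : I → V) (k : I) :
    ∫ z, z k * fderiv ℝ F (ψ + ∑ i, z i • c i) v ∂stdGaussianPi I
      = ∫ z, fderiv ℝ (fderiv ℝ F) (ψ + ∑ i, z i • c i) (c k) v ∂stdGaussianPi I := by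
  classical
  have hF' : ContDiff ℝ 1 (fderiv ℝ F) := hF.fderiv_right le_rfl
  have hcurve : ContDiff ℝ 1 fun z : I → ℝ => ψ + ∑ i, z i • c i := by fun_prop
  have hderiv (z : I → ℝ) :
      fderiv ℝ (fun z : I → ℝ => fderiv ℝ F (ψ + ∑ i, z i • c i) v) z (Pi.single k 1)
        = fderiv ℝ (fderiv ℝ F) (ψ + ∑ i, z i • c i) (c k) v := by
    have hX : HasFDerivAt (fun z : I → ℝ => ψ + ∑ i, z i • c i)
        (∑ i, (ContinuousLinearMap.proj (R := ℝ) i).smulRight (c i)) z :=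
      (HasFDerivAt.fun_sum fun i _ => (hasFDerivAt_apply i z).smul_const (c i)).const_add ψ
    have := ((hF'.differentiable one_ne_zero _).hasFDerivAt.comp z hX).clm_apply
      (hasFDerivAt_const v z)
    simp only [Function.comp_apply] at this
    rw [this.fderiv]
    simp [Pi.single_apply]
  have hsmooth : ContDiff ℝ 1 fun z : I → ℝ => fderiv ℝ F (ψ + ∑ i, z i • c i) v :=
    (hF'.comp hcurve).clm_apply contDiff_const
  simp_rw [← hderiv]
  refine integral_eval_mul_stdGaussianPi (C := C₁ * ‖v‖) (C' := C₂ * ‖c k‖ * ‖v‖) hsmooth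
    (fun z => ?_) k fun z => ?_
  · exact (fderiv ℝ F _).le_of_opNorm_le (hF₁ _) v
  · rw [hderiv]
    exact ((fderiv ℝ (fderiv ℝ F) _).le_opNorm₂ (c k) v).trans (by gcongr; exact hF₂ _)

lemma hasDerivAt_integral_affine (hF : ContDiff ℝ 2 F) {C₀ M : ℝ} (hF₀ : ∀ x, |F x| ≤ C₀)
    (hF₁ : ∀ x, ‖fderiv ℝ F x‖ ≤ C₁) (hF₂ : ∀ x, ‖fderiv ℝ (fderiv ℝ F) x‖ ≤ C₂) (ψ : V)
    {c c' : ℝ → I → V} (hc : ∀ α k, HasDerivAt (c · k) (c' α k) α) (hM : ∀ α k, ‖c' α k‖ ≤ M)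
    (α : ℝ) :
    HasDerivAt (fun α => ∫ z, F (ψ + ∑ k, z k • c α k) ∂stdGaussianPi I)
      (∫ z, ∑ k, fderiv ℝ (fderiv ℝ F) (ψ + ∑ i, z i • c α i) (c α k) (c' α k)
        ∂stdGaussianPi I) α := by
  have hF' : ContDiff ℝ 1 (fderiv ℝ F) := hF.fderiv_right le_rfl
  have : Continuous (fderiv ℝ (fderiv ℝ F)) := hF'.continuous_fderiv one_ne_zero
  have hC₁ : 0 ≤ C₁ := (norm_nonneg _).trans (hF₁ ψ)
  have hF'cont := hF'.continuous
  have hFcont := hF.continuous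
  have hint (k : I) : Integrable (fun z : I → ℝ =>
      z k * fderiv ℝ F (ψ + ∑ i, z i • c α i) (c' α k)) (stdGaussianPi I) := by
    refine (integrable_eval_stdGaussianPi k).mul_bdd (c := C₁ * ‖c' α k‖)
      (Continuous.aestronglyMeasurable (by fun_prop)) (ae_of_all _ fun z => ?_)
    exact (fderiv ℝ F _).le_of_opNorm_le (hF₁ _) _
  have hint₂ (k : I) : Integrable (fun z : I → ℝ =>
      fderiv ℝ (fderiv ℝ F) (ψ + ∑ i, z i • c α i) (c α k) (c' α k)) (stdGaussianPi I) :=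
    .of_bound (C := C₂ * ‖c α k‖ * ‖c' α k‖) (Continuous.aestronglyMeasurable (by fun_prop))
      (ae_of_all _ fun z => ((fderiv ℝ (fderiv ℝ F) _).le_opNorm₂ _ _).trans
        (by gcongr; exact hF₂ _))
  rw [integral_finsetSum _ fun k _ => hint₂ k]
  simp_rw [← integral_eval_mul_fderiv_affine hF hF₁ hF₂]
  rw [← integral_finsetSum _ fun k _ => hint k]
  refine (hasDerivAt_integral_of_dominated_loc_of_deriv_le
    (F' := fun α (z : I → ℝ) => ∑ k, z k * fderiv ℝ F (ψ + ∑ i, z i • c α i) (c' α k))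
    (bound := fun z => ∑ k, |z k| * (C₁ * M)) univ_mem ?_ ?_ ?_ ?_ ?_ ?_).2
  · exact .of_forall fun β => Continuous.aestronglyMeasurable (by fun_prop)
  · exact .of_bound (Continuous.aestronglyMeasurable (by fun_prop)) C₀ (ae_of_all _ fun z => hF₀ _)
  · exact Continuous.aestronglyMeasurable (by fun_prop)
  · refine ae_of_all _ fun z β _ => (norm_sum_le _ _).trans (Finset.sum_le_sum fun k _ => ?_)
    rw [norm_mul, Real.norm_eq_abs]
    gcongr
    exact ((fderiv ℝ F _).le_of_opNorm_le (hF₁ _) _).trans (by gcongr; exact hM β k)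
  · exact integrable_finsetSum _ fun k _ => (integrable_eval_stdGaussianPi k).abs.mul_const _
  · refine ae_of_all _ fun z β _ => ?_
    have hX : HasDerivAt (fun β => ψ + ∑ k, z k • c β k) (∑ k, z k • c' β k) β :=
      (HasDerivAt.fun_sum fun k _ => (hc β k).const_smul (z k)).const_add ψ
    simpa [Function.comp_def] using
      (hF.differentiable two_ne_zero _).hasFDerivAt.comp_hasDerivAt β hX

lemma measurePreserving_comp_inl (I J : Type*) [Fintype I] [Fintype J] :
    MeasurePreserving (fun z : I ⊕ J → ℝ => z ∘ Sum.inl) (stdGaussianPi (I ⊕ J))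
      (stdGaussianPi I) :=
  measurePreserving_fst.comp (measurePreserving_sumPiEquivProdPi fun _ => stdG)

lemma measurePreserving_comp_inr (I J : Type*) [Fintype I] [Fintype J] :
    MeasurePreserving (fun z : I ⊕ J → ℝ => z ∘ Sum.inr) (stdGaussianPi (I ⊕ J))
      (stdGaussianPi J) :=
  measurePreserving_snd.comp (measurePreserving_sumPiEquivProdPi fun _ => stdG)

variable {J : Type*} [Fintype J]

/-- The family `(sin α • aₖ)ₖ, (cos α • bₗ)ₗ`, a path from `(0, b)` to `(a, 0)`: Gaussian
combinations of it interpolate between the two processes of Kahane's inequality. -/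
def sinCosPath (a : I → V) (b : J → V) (α : ℝ) : I ⊕ J → V :=
  Sum.elim (fun k => sin α • a k) fun l => cos α • b l

lemma hasDerivAt_integral_sinCosPath (hF : ContDiff ℝ 2 F) {C₀ : ℝ} (hF₀ : ∀ x, |F x| ≤ C₀)
    (hF₁ : ∀ x, ‖fderiv ℝ F x‖ ≤ C₁) (hF₂ : ∀ x, ‖fderiv ℝ (fderiv ℝ F) x‖ ≤ C₂) (ψ : V)
    (a : I → V) (b : J → V) (α : ℝ) :
    HasDerivAt
      (fun α => ∫ z, F (ψ + ∑ k, z k • sinCosPath a b α k) ∂stdGaussianPi (I ⊕ J))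
      (∫ z, sin α * cos α *
          (∑ k, fderiv ℝ (fderiv ℝ F) (ψ + ∑ i, z i • sinCosPath a b α i) (a k) (a k)
            - ∑ l, fderiv ℝ (fderiv ℝ F) (ψ + ∑ i, z i • sinCosPath a b α i) (b l) (b l))
        ∂stdGaussianPi (I ⊕ J)) α := by
  convert! hasDerivAt_integral_affine hF hF₀ hF₁ hF₂ ψ (c := sinCosPath a b)
    (c' := fun α => Sum.elim (fun k => cos α • a k) fun l => -sin α • b l)
    (M := ∑ k, ‖Sum.elim a b k‖) (fun α k => ?_) (fun α k => ?_) α using 1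
  · congr with z
    simp only [Fintype.sum_sum_type, sinCosPath, Sum.elim_inl, Sum.elim_inr, map_smul, smul_apply,
      smul_eq_mul, neg_mul, Finset.sum_neg_distrib, mul_add, Finset.mul_sum, sub_eq_add_neg,
      mul_assoc, mul_neg, mul_left_comm (cos α) (sin α)]
  · cases k with
    | inl k => exact (hasDerivAt_sin α).smul_const (a k)
    | inr l => exact (hasDerivAt_cos α).smul_const (b l)
  · refine le_trans ?_ (Finset.single_le_sum (fun _ _ => norm_nonneg _) (Finset.mem_univ k))
    cases k with
    | inl k => simpa [norm_smul] using
        mul_le_of_le_one_left (norm_nonneg (a k)) (abs_cos_le_one α)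
    | inr l => simpa [norm_smul] using
        mul_le_of_le_one_left (norm_nonneg (b l)) (abs_sin_le_one α)

theorem integral_affine_le_of_sum_fderiv_fderiv_le (hF : ContDiff ℝ 2 F) {C₀ : ℝ}
    (hF₀ : ∀ x, |F x| ≤ C₀) (hF₁ : ∀ x, ‖fderiv ℝ F x‖ ≤ C₁)
    (hF₂ : ∀ x, ‖fderiv ℝ (fderiv ℝ F) x‖ ≤ C₂) (ψ : V) (a : I → V) (b : J → V)
    (h : ∀ x, ∑ l, fderiv ℝ (fderiv ℝ F) x (b l) (b l)
      ≤ ∑ k, fderiv ℝ (fderiv ℝ F) x (a k) (a k)) :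
    ∫ z, F (ψ + ∑ l, z l • b l) ∂stdGaussianPi J
      ≤ ∫ z, F (ψ + ∑ k, z k • a k) ∂stdGaussianPi I := by
  set φ : ℝ → ℝ := fun α => ∫ z, F (ψ + ∑ k, z k • sinCosPath a b α k) ∂stdGaussianPi (I ⊕ J)
    with hφ
  have hφ' := hasDerivAt_integral_sinCosPath hF hF₀ hF₁ hF₂ ψ a b
  have hmono : MonotoneOn φ (Icc 0 (π / 2)) := by
    refine monotoneOn_of_hasDerivWithinAt_nonneg (convex_Icc _ _)
      (fun α _ => (hφ' α).continuousAt.continuousWithinAt)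
      (fun α _ => (hφ' α).hasDerivWithinAt) fun α hα => integral_nonneg fun z => ?_
    rw [interior_Icc] at hα
    have hsin : 0 ≤ sin α := sin_nonneg_of_nonneg_of_le_pi hα.1.le (by linarith [hα.2, pi_pos])
    have hcos : 0 ≤ cos α := cos_nonneg_of_mem_Icc ⟨by linarith [hα.1, pi_pos], hα.2.le⟩
    exact mul_nonneg (mul_nonneg hsin hcos) (sub_nonneg.2 (h _))
  have hFcont := hF.continuous
  have h_zero : φ 0 = ∫ z, F (ψ + ∑ l, z l • b l) ∂stdGaussianPi J := by
    rw [← (measurePreserving_comp_inr I J).map_eq,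
      integral_map (measurePreserving_comp_inr I J).aemeasurable
        (Continuous.aestronglyMeasurable (by fun_prop))]
    simp [hφ, sinCosPath, Fintype.sum_sum_type]
  have h_pi_div_two : φ (π / 2) = ∫ z, F (ψ + ∑ k, z k • a k) ∂stdGaussianPi I := by
    rw [← (measurePreserving_comp_inl I J).map_eq,
      integral_map (measurePreserving_comp_inl I J).aemeasurable
        (Continuous.aestronglyMeasurable (by fun_prop))]
    simp [hφ, sinCosPath, Fintype.sum_sum_type]
  rw [← h_zero, ← h_pi_div_two]
  exact hmono (left_mem_Icc.2 (by positivity)) (right_mem_Icc.2 (by positivity)) (by positivity)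

end Interpolation

/-! ### Mixed second derivatives -/

lemma hasDerivAt_nonneg_of_le_right {φ : ℝ → ℝ} {φ' x : ℝ} (hφ : HasDerivAt φ φ' x)
    (h : ∀ y, x < y → φ x ≤ φ y) : 0 ≤ φ' := by
  refine ge_of_tendsto (hφ.tendsto_slope.mono_left (nhdsGT_le_nhdsNE x)) ?_
  filter_upwards [self_mem_nhdsWithin] with y hy
  rw [slope_def_field]
  exact div_nonneg (sub_nonneg.2 (h y hy)) (sub_nonneg.2 (le_of_lt hy))

section SecondDerivative

variable {V : Type*} [NormedAddCommGroup V] [NormedSpace ℝ V] {F : V → ℝ}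

lemma hasDerivAt_comp_line {E : Type*} [NormedAddCommGroup E] [NormedSpace ℝ E] {G : V → E}
    (hG : Differentiable ℝ G) (x v : V) :
    HasDerivAt (fun t : ℝ => G (x + t • v)) (fderiv ℝ G x v) 0 := by
  have hline : HasDerivAt (fun t : ℝ => x + t • v) v 0 := by
    simpa using ((hasDerivAt_id (0 : ℝ)).smul_const v).const_add x
  have hGx : HasFDerivAt G (fderiv ℝ G x) (x + (0 : ℝ) • v) := by simpa using (hG x).hasFDerivAt
  exact hGx.comp_hasDerivAt 0 hline

lemma fderiv_fderiv_nonneg_of_supermodular (hF : ContDiff ℝ 2 F) {u v : V}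
    (h : ∀ x, ∀ s > (0 : ℝ), ∀ t > (0 : ℝ),
      F (x + s • u) - F x ≤ F (x + t • v + s • u) - F (x + t • v)) (x : V) :
    0 ≤ fderiv ℝ (fderiv ℝ F) x u v := by
  have hF₁ : Differentiable ℝ F := hF.differentiable two_ne_zero
  have hF₂ : Differentiable ℝ (fderiv ℝ F) :=
    (hF.fderiv_right (m := 1) le_rfl).differentiable one_ne_zero
  have hmono (s : ℝ) (hs : 0 < s) : fderiv ℝ F x v ≤ fderiv ℝ F (x + s • u) v := by
    refine sub_nonneg.1 (hasDerivAt_nonneg_of_le_right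
      ((hasDerivAt_comp_line hF₁ (x + s • u) v).sub (hasDerivAt_comp_line hF₁ x v)) fun t ht => ?_)
    simpa [add_right_comm] using h x s hs t ht
  refine (hasDerivAt_nonneg_of_le_right ((hasDerivAt_comp_line hF₂ x u).clm_apply
    (hasDerivAt_const 0 v)) fun s hs => ?_).trans_eq (by simp)
  simpa using hmono s hs

lemma sum_fderiv_fderiv_apply_self {N I : Type*} [Fintype N] [DecidableEq N] [Fintype I]
    (F : (N → ℝ) → ℝ) (x : N → ℝ) (A : N → I → ℝ) :
    ∑ k, fderiv ℝ (fderiv ℝ F) x (fun i => A i k) (fun i => A i k)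
      = ∑ i, ∑ j, (A i ⬝ᵥ A j) * fderiv ℝ (fderiv ℝ F) x (Pi.single i 1) (Pi.single j 1) := by
  have hbasis (k : I) : (fun i => A i k) = ∑ i, A i k • Pi.single (M := fun _ => ℝ) i 1 :=
    pi_eq_sum_univ' _
  have hexpand (k : I) : fderiv ℝ (fderiv ℝ F) x (fun i => A i k) (fun i => A i k)
      = ∑ i, ∑ j, A i k * A j k *
        fderiv ℝ (fderiv ℝ F) x (Pi.single i 1) (Pi.single j 1) := by
    rw [hbasis]
    simp only [map_sum, map_smul, smul_apply, sum_apply, smul_eq_mul, Finset.mul_sum, mul_assoc]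
    rw [Finset.sum_comm]
    simp only [mul_left_comm]
  simp_rw [hexpand, dotProduct, Finset.sum_mul]
  rw [Finset.sum_comm]
  exact Finset.sum_congr rfl fun i _ => Finset.sum_comm

end SecondDerivative

section SigmoidBounds

open scoped ContDiff

lemma exists_norm_comp_sigmoid_le {N E : Type*} [NormedAddCommGroup E] {Q : (N → ℝ) → E}
    (hQ : Continuous Q) : ∃ C, ∀ x : N → ℝ, ‖Q fun i => sigmoid (x i)‖ ≤ C := by
  obtain ⟨C, hC⟩ := (isCompact_Icc (a := (0 : N → ℝ)) (b := 1)).exists_bound_of_continuousOn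
    hQ.continuousOn
  exact ⟨C, fun x => hC _ ⟨fun i => sigmoid_nonneg _, fun i => sigmoid_le_one _⟩⟩

variable {N E : Type*} [Fintype N] [NormedAddCommGroup E] [NormedSpace ℝ E] {Q : (N → ℝ) → E}

/- The derivative of `sigmoid` is a polynomial in `sigmoid`, so functions of the form
`Q (sigmoid ∘ x)` with `Q` smooth are closed under differentiation; since `sigmoid` takes values
in `[0, 1]`, all of them are bounded. -/
lemma exists_contDiff_fderiv_comp_sigmoid (hQ : ContDiff ℝ ∞ Q) :
    ∃ Q₁ : (N → ℝ) → (N → ℝ) →L[ℝ] E, ContDiff ℝ ∞ Q₁ ∧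
      fderiv ℝ (fun x : N → ℝ => Q fun i => sigmoid (x i))
        = fun x => Q₁ fun i => sigmoid (x i) := by
  classical
  refine ⟨fun s => (fderiv ℝ Q s).comp (∑ i, (s i * (1 - s i)) •
    (ContinuousLinearMap.proj (R := ℝ) (φ := fun _ : N => ℝ) i).smulRight (Pi.single i 1)), ?_, ?_⟩
  · have : ContDiff ℝ ∞ (fderiv ℝ Q) := hQ.fderiv_right le_rfl
    fun_prop
  · ext1 x
    have hS : HasFDerivAt (fun x : N → ℝ => fun i => sigmoid (x i))
        (∑ i, (sigmoid (x i) * (1 - sigmoid (x i))) •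
          (ContinuousLinearMap.proj (R := ℝ) (φ := fun _ : N => ℝ) i).smulRight (Pi.single i 1))
        x := by
      refine hasFDerivAt_pi'.2 fun i => ?_
      have hproj : HasFDerivAt (fun x : N → ℝ => x i) (ContinuousLinearMap.proj (R := ℝ) i) x :=
        hasFDerivAt_apply i x
      convert! (hasDerivAt_sigmoid (x i)).comp_hasFDerivAt x hproj using 1
      ext v
      simp [Pi.single_apply]
    exact ((hQ.differentiable (by simp) _).hasFDerivAt.comp x hS).fderiv

lemma exists_norm_fderiv_comp_sigmoid_le (hQ : ContDiff ℝ ∞ Q) :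
    ∃ C, ∀ x, ‖fderiv ℝ (fun x : N → ℝ => Q fun i => sigmoid (x i)) x‖ ≤ C := by
  obtain ⟨Q₁, hQ₁, h⟩ := exists_contDiff_fderiv_comp_sigmoid hQ
  simpa only [h] using exists_norm_comp_sigmoid_le hQ₁.continuous

lemma exists_norm_fderiv_fderiv_comp_sigmoid_le (hQ : ContDiff ℝ ∞ Q) :
    ∃ C, ∀ x, ‖fderiv ℝ (fderiv ℝ fun x : N → ℝ => Q fun i => sigmoid (x i)) x‖ ≤ C := by
  obtain ⟨Q₁, hQ₁, h⟩ := exists_contDiff_fderiv_comp_sigmoid hQ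
  simpa only [h] using exists_norm_fderiv_comp_sigmoid_le hQ₁

end SigmoidBounds

/-! ### Gordon's inequality for finite families -/

section SoftForallExists

variable {ι κ : Type*} [Fintype κ]

/-- A smooth surrogate, with values in `[0, 1]`, of the indicator of `{x | ∃ b, 0 < x (a, b)}`. -/
def softExists (x : ι × κ → ℝ) (a : ι) : ℝ := 1 - ∏ b, (1 - sigmoid (x (a, b)))

/-- A smooth surrogate, with values in `[0, 1]`, of the indicator of
`{x | ∀ a, ∃ b, 0 < x (a, b)}`; it is the test function of the Gaussian interpolation. -/
def softForallExists [Fintype ι] (x : ι × κ → ℝ) : ℝ := ∏ a, softExists x a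

lemma prod_one_sub_sigmoid_mem_Icc (v : κ → ℝ) : ∏ b, (1 - sigmoid (v b)) ∈ Icc (0 : ℝ) 1 :=
  ⟨Finset.prod_nonneg fun _ _ => sub_nonneg.2 (sigmoid_le_one _),
    Finset.prod_le_one (fun _ _ => sub_nonneg.2 (sigmoid_le_one _))
      fun _ _ => sub_le_self _ (sigmoid_nonneg _)⟩

lemma softExists_nonneg (x : ι × κ → ℝ) (a : ι) : 0 ≤ softExists x a :=
  sub_nonneg.2 (prod_one_sub_sigmoid_mem_Icc _).2

lemma softExists_le_one (x : ι × κ → ℝ) (a : ι) : softExists x a ≤ 1 :=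
  sub_le_self _ (prod_one_sub_sigmoid_mem_Icc _).1

lemma softExists_mono {x y : ι × κ → ℝ} (h : x ≤ y) (a : ι) : softExists x a ≤ softExists y a := by
  refine sub_le_sub_left (Finset.prod_le_prod (fun b _ => sub_nonneg.2 (sigmoid_le_one _))
    fun b _ => ?_) _
  exact sub_le_sub_left (sigmoid_monotone (h _)) _

lemma softExists_add_smul_single_of_ne [DecidableEq (ι × κ)] {q : ι × κ} {a : ι} (ha : a ≠ q.1)
    (x : ι × κ → ℝ) (t : ℝ) : softExists (x + t • Pi.single q 1) a = softExists x a := by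
  have hne (b : κ) : (a, b) ≠ q := fun h => ha (congrArg Prod.fst h)
  simp [softExists, hne]

variable [Fintype ι]

lemma softForallExists_mem_Icc (x : ι × κ → ℝ) : softForallExists x ∈ Icc (0 : ℝ) 1 :=
  ⟨Finset.prod_nonneg fun a _ => softExists_nonneg x a,
    Finset.prod_le_one (fun a _ => softExists_nonneg x a) fun a _ => softExists_le_one x a⟩

lemma softForallExists_supermodular [DecidableEq (ι × κ)] {q r : ι × κ} (hqr : q.1 ≠ r.1)
    (x : ι × κ → ℝ) {s t : ℝ} (hs : 0 ≤ s) (ht : 0 ≤ t) :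
    softForallExists (x + s • Pi.single q 1) - softForallExists x
      ≤ softForallExists (x + t • Pi.single r 1 + s • Pi.single q 1)
        - softForallExists (x + t • Pi.single r 1) := by
  classical
  have hfactor (y : ι × κ → ℝ) :
      softForallExists (y + s • Pi.single q 1) - softForallExists y
        = (softExists (y + s • Pi.single q 1) q.1 - softExists y q.1)
          * ∏ a ∈ Finset.univ.erase q.1, softExists y a := by
    simp only [softForallExists, ← Finset.mul_prod_erase _ _ (Finset.mem_univ q.1), sub_mul]
    congr 2
    exact Finset.prod_congr rfl fun a ha =>
      softExists_add_smul_single_of_ne (Finset.ne_of_mem_erase ha) y s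
  have hnonneg (r : ι × κ) {t : ℝ} (ht : 0 ≤ t) : 0 ≤ t • Pi.single (M := fun _ => ℝ) r 1 :=
    smul_nonneg ht (Pi.single_nonneg.2 zero_le_one)
  rw [hfactor, hfactor, add_right_comm, softExists_add_smul_single_of_ne hqr,
    softExists_add_smul_single_of_ne hqr]
  gcongr with a _
  · exact sub_nonneg.2 (softExists_mono (le_add_of_nonneg_right (hnonneg q hs)) _)
  · exact fun a _ => softExists_nonneg x a
  · exact softExists_mono (le_add_of_nonneg_right (hnonneg r ht)) a

lemma tendsto_softForallExists_zero {x : ι × κ → ℝ} (h : ∃ a, ∀ b, x (a, b) < 0) :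
    Tendsto (fun N : ℕ => softForallExists ((N : ℝ) • x)) atTop (𝓝 0) := by
  classical
  obtain ⟨a, ha⟩ := h
  have hsoft : Tendsto (fun N : ℕ => softExists ((N : ℝ) • x) a) atTop (𝓝 0) := by
    have hsigmoid (b : κ) :
        Tendsto (fun N : ℕ => 1 - sigmoid (((N : ℝ) • x) (a, b))) atTop (𝓝 (1 - 0)) :=
      (tendsto_sigmoid_atBot.comp
        (tendsto_natCast_atTop_atTop.atTop_mul_const_of_neg (ha b))).const_sub 1
    simpa [softExists] using (tendsto_finsetProd Finset.univ fun b _ => hsigmoid b).const_sub 1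
  refine squeeze_zero (fun N => (softForallExists_mem_Icc _).1) (fun N => ?_) hsoft
  rw [softForallExists, ← Finset.mul_prod_erase _ _ (Finset.mem_univ a)]
  exact mul_le_of_le_one_right (softExists_nonneg _ _)
    (Finset.prod_le_one (fun _ _ => softExists_nonneg _ _) fun _ _ => softExists_le_one _ _)

lemma tendsto_softForallExists_one {x : ι × κ → ℝ} (h : ∀ a, ∃ b, 0 < x (a, b)) :
    Tendsto (fun N : ℕ => softForallExists ((N : ℝ) • x)) atTop (𝓝 1) := by
  classical
  have hsoft (a : ι) : Tendsto (fun N : ℕ => softExists ((N : ℝ) • x) a) atTop (𝓝 1) := by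
    obtain ⟨b, hb⟩ := h a
    have hsigmoid :
        Tendsto (fun N : ℕ => sigmoid (((N : ℝ) • x) (a, b))) atTop (𝓝 1) :=
      tendsto_sigmoid_atTop.comp (tendsto_natCast_atTop_atTop.atTop_mul_const hb)
    refine tendsto_of_tendsto_of_tendsto_of_le_of_le hsigmoid tendsto_const_nhds (fun N => ?_)
      fun N => softExists_le_one _ a
    refine le_sub_comm.1 ?_
    rw [← Finset.mul_prod_erase _ _ (Finset.mem_univ b)]
    exact mul_le_of_le_one_right (sub_nonneg.2 (sigmoid_le_one _))
      (Finset.prod_le_one (fun _ _ => sub_nonneg.2 (sigmoid_le_one _))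
        fun _ _ => sub_le_self _ (sigmoid_nonneg _))
  simpa [softForallExists] using tendsto_finsetProd Finset.univ fun a _ => hsoft a

end SoftForallExists

lemma measure_le_of_tendsto_of_integral_le {Ω Ω' : Type*} [MeasurableSpace Ω]
    [MeasurableSpace Ω'] {P : Measure Ω} {Q : Measure Ω'} [IsProbabilityMeasure P]
    [IsProbabilityMeasure Q] {S : Set Ω} {T : Set Ω'} (hS : MeasurableSet S)
    (hT : MeasurableSet T) {f : ℕ → Ω → ℝ} {g : ℕ → Ω' → ℝ} (hf : ∀ N, Measurable (f N))
    (hg : ∀ N, Measurable (g N)) (hf₀₁ : ∀ N z, f N z ∈ Icc (0 : ℝ) 1)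
    (hg₀₁ : ∀ N z, g N z ∈ Icc (0 : ℝ) 1) (hfS : ∀ z ∈ S, Tendsto (f · z) atTop (𝓝 0))
    (hgT : ∀ z ∉ T, Tendsto (g · z) atTop (𝓝 1))
    (hfg : ∀ N, ∫ z, g N z ∂Q ≤ ∫ z, f N z ∂P) : P S ≤ Q T := by
  have hfint (N : ℕ) : Integrable (f N) P := .of_mem_Icc 0 1 (hf N).aemeasurable
    (ae_of_all _ (hf₀₁ N))
  have hgint (N : ℕ) : Integrable (g N) Q := .of_mem_Icc 0 1 (hg N).aemeasurable
    (ae_of_all _ (hg₀₁ N))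
  have hnorm {r : ℝ} (hr : r ∈ Icc (0 : ℝ) 1) : ‖r‖ ≤ 1 := by
    rw [norm_of_nonneg hr.1]; exact hr.2
  have hlimS : Tendsto (fun N => ∫ z in S, f N z ∂P) atTop (𝓝 0) := by
    simpa using tendsto_integral_of_dominated_convergence (fun _ => 1)
      (fun N => (hf N).aestronglyMeasurable) (integrable_const _)
      (fun N => ae_of_all _ fun z => hnorm (hf₀₁ N z))
      ((ae_restrict_iff' hS).2 (ae_of_all P hfS))
  have hlimT : Tendsto (fun N => ∫ z in Tᶜ, g N z ∂Q) atTop (𝓝 (Q.real Tᶜ)) := by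
    simpa using tendsto_integral_of_dominated_convergence (fun _ => 1)
      (fun N => (hg N).aestronglyMeasurable) (integrable_const _)
      (fun N => ae_of_all _ fun z => hnorm (hg₀₁ N z))
      ((ae_restrict_iff' hT.compl).2 (ae_of_all Q hgT))
  have hle (N : ℕ) : ∫ z in Tᶜ, g N z ∂Q ≤ ∫ z in S, f N z ∂P + P.real Sᶜ :=
    calc ∫ z in Tᶜ, g N z ∂Q ≤ ∫ z, g N z ∂Q :=
          setIntegral_le_integral (hgint N) (ae_of_all _ fun z => (hg₀₁ N z).1)
      _ ≤ ∫ z, f N z ∂P := hfg N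
      _ = ∫ z in S, f N z ∂P + ∫ z in Sᶜ, f N z ∂P := (integral_add_compl hS (hfint N)).symm
      _ ≤ ∫ z in S, f N z ∂P + P.real Sᶜ := by
          gcongr
          simpa using setIntegral_mono (s := Sᶜ) (hfint N).integrableOn
            (integrable_const (1 : ℝ)).integrableOn fun z => (hf₀₁ N z).2
  have hcompl : Q.real Tᶜ ≤ P.real Sᶜ := by
    simpa using le_of_tendsto_of_tendsto' hlimT (hlimS.add_const _) hle
  rw [probReal_compl_eq_one_sub hS, probReal_compl_eq_one_sub hT] at hcompl
  exact (ENNReal.toReal_le_toReal (measure_ne_top _ _) (measure_ne_top _ _)).1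
    (sub_le_sub_iff_left 1 |>.1 hcompl)

section GordonFinite

open scoped ContDiff

variable {ι κ I J : Type*} [Fintype I] [Fintype J]

section SoftForallExists

variable [Fintype ι] [Fintype κ]

lemma contDiff_softForallExists {n : WithTop ℕ∞} :
    ContDiff ℝ n (softForallExists : (ι × κ → ℝ) → ℝ) := by
  unfold softForallExists softExists
  exact contDiff_prod fun a _ => contDiff_const.sub <| contDiff_prod fun b _ =>
    contDiff_const.sub <| (contDiff_apply ℝ ℝ (a, b)).sigmoid.of_le le_top

lemma continuous_softForallExists_add_dotProduct (ψ : ι × κ → ℝ) (A : ι × κ → I → ℝ) :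
    Continuous fun z => softForallExists fun q => ψ q + A q ⬝ᵥ z := by
  have := (contDiff_softForallExists (ι := ι) (κ := κ) (n := 0)).continuous
  unfold dotProduct
  fun_prop

lemma add_dotProduct_eq_add_sum_smul {N : Type*} (ψ : N → ℝ) (A : N → I → ℝ) (z : I → ℝ) :
    (fun q => ψ q + A q ⬝ᵥ z) = ψ + ∑ k, z k • fun q => A q k := by
  ext q
  simp [dotProduct, mul_comm]

lemma integral_softForallExists_le {A : ι × κ → I → ℝ} {B : ι × κ → J → ℝ}
    (hsame : ∀ a b b', A (a, b) ⬝ᵥ A (a, b') = B (a, b) ⬝ᵥ B (a, b'))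
    (hdiff : ∀ q r, B q ⬝ᵥ B r ≤ A q ⬝ᵥ A r) (ψ : ι × κ → ℝ) :
    ∫ z, softForallExists (fun q => ψ q + B q ⬝ᵥ z) ∂stdGaussianPi J
      ≤ ∫ z, softForallExists (fun q => ψ q + A q ⬝ᵥ z) ∂stdGaussianPi I := by
  classical
  have hpoly : ContDiff ℝ ∞ fun s : ι × κ → ℝ => ∏ a, (1 - ∏ b, (1 - s (a, b))) := by fun_prop
  obtain ⟨C₁, hC₁⟩ := exists_norm_fderiv_comp_sigmoid_le hpoly
  obtain ⟨C₂, hC₂⟩ := exists_norm_fderiv_fderiv_comp_sigmoid_le hpoly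
  simp_rw [add_dotProduct_eq_add_sum_smul]
  refine integral_affine_le_of_sum_fderiv_fderiv_le (C₀ := 1) contDiff_softForallExists
    (fun x => abs_le.2 ⟨by linarith [(softForallExists_mem_Icc x).1],
      (softForallExists_mem_Icc x).2⟩) hC₁ hC₂ ψ _ _ fun x => ?_
  rw [sum_fderiv_fderiv_apply_self, sum_fderiv_fderiv_apply_self]
  refine Finset.sum_le_sum fun q _ => Finset.sum_le_sum fun r _ => ?_
  by_cases hqr : q.1 = r.1
  · obtain ⟨⟨a, b⟩, a', b'⟩ := q, r
    obtain rfl : a = a' := hqr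
    rw [hsame]
  · exact mul_le_mul_of_nonneg_right (hdiff q r) (fderiv_fderiv_nonneg_of_supermodular
      contDiff_softForallExists
      (fun x s hs t ht => softForallExists_supermodular hqr x hs.le ht.le) x)

end SoftForallExists

theorem gordon_finite [Finite ι] [Finite κ] {A : ι × κ → I → ℝ} {B : ι × κ → J → ℝ}
    (hsame : ∀ a b b', A (a, b) ⬝ᵥ A (a, b') = B (a, b) ⬝ᵥ B (a, b'))
    (hdiff : ∀ q r, B q ⬝ᵥ B r ≤ A q ⬝ᵥ A r) (ψ : ι × κ → ℝ) :
    stdGaussianPi I {z | ∃ a, ∀ b, ψ (a, b) + A (a, b) ⬝ᵥ z < 0}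
      ≤ stdGaussianPi J {z | ∃ a, ∀ b, ψ (a, b) + B (a, b) ⬝ᵥ z ≤ 0} := by
  cases nonempty_fintype ι
  cases nonempty_fintype κ
  refine measure_le_of_tendsto_of_integral_le ?_ ?_
    (f := fun N z => softForallExists fun q => N * ψ q + ((N : ℝ) • A q) ⬝ᵥ z)
    (g := fun N z => softForallExists fun q => N * ψ q + ((N : ℝ) • B q) ⬝ᵥ z)
    (fun N => (continuous_softForallExists_add_dotProduct _ _).measurable)
    (fun N => (continuous_softForallExists_add_dotProduct _ _).measurable)
    (fun N z => softForallExists_mem_Icc _) (fun N z => softForallExists_mem_Icc _)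
    (fun z hz => ?_) (fun z hz => ?_) fun N => ?_
  · simp only [dotProduct]
    measurability
  · simp only [dotProduct]
    measurability
  · simp_rw [smul_dotProduct, smul_eq_mul, ← mul_add]
    exact tendsto_softForallExists_zero (x := fun q => ψ q + A q ⬝ᵥ z) hz
  · simp_rw [smul_dotProduct, smul_eq_mul, ← mul_add]
    exact tendsto_softForallExists_one (x := fun q => ψ q + B q ⬝ᵥ z) (by simpa using hz)
  · refine integral_softForallExists_le (by simp [hsame]) (fun q r => ?_) _
    simp only [smul_dotProduct, dotProduct_smul]
    gcongr
    exact hdiff q r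

end GordonFinite

/-! ### Gordon's inequality for compact families -/

section GordonCompact

open TopologicalSpace

variable {Ω : Type*} [MeasurableSpace Ω] {S T : Type*} [TopologicalSpace S] [TopologicalSpace T]

lemma measure_exists_forall_lt_le_iSup [CompactSpace T] {X : Ω → S → T → ℝ}
    (hX : ∀ ω, Continuous fun q : S × T => X ω q.1 q.2) {d : ℕ → S} (hd : DenseRange d)
    (P : Measure Ω) :
    P {ω | ∃ s, ∀ t, X ω s t < 0} ≤ ⨆ m, P {ω | ∃ i : Fin m, ∀ t, X ω (d i) t < 0} := by
  have hmono : Monotone fun m => {ω | ∃ i : Fin m, ∀ t, X ω (d i) t < 0} :=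
    fun m m' hm ω ⟨i, hi⟩ => ⟨i.castLE hm, hi⟩
  rw [← hmono.measure_iUnion]
  refine measure_mono ?_
  rintro ω ⟨s₀, hs₀⟩
  have hopen : IsOpen {s | ∀ t ∈ (univ : Set T), X ω s t < 0} :=
    isOpen_iff_mem_nhds.2 fun s hs => isCompact_univ.eventually_forall_of_forall_eventually
      fun t ht => (hX ω).continuousAt.eventually_lt continuousAt_const (hs t ht)
  obtain ⟨_, hs, i, rfl⟩ := hd.inter_open_nonempty _ hopen ⟨s₀, fun t _ => hs₀ t⟩
  exact mem_iUnion.2 ⟨i + 1, Fin.last i, fun t => hs t (mem_univ t)⟩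

lemma le_measure_exists_forall_le {ι : Type*} [Finite ι] {Y : Ω → ι → T → ℝ}
    (hY : ∀ i t, Measurable (Y · i t)) (hYc : ∀ ω i, Continuous (Y ω i)) {e : ℕ → T}
    (he : DenseRange e) {P : Measure Ω} [IsFiniteMeasure P] {c : ENNReal}
    (h : ∀ r : ℕ, c ≤ P {ω | ∃ i, ∀ j : Fin r, Y ω i (e j) ≤ 0}) :
    c ≤ P {ω | ∃ i, ∀ t, Y ω i t ≤ 0} := by
  cases nonempty_fintype ι
  have hanti : Antitone fun r => {ω | ∃ i, ∀ j : Fin r, Y ω i (e j) ≤ 0} :=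
    fun r r' hr ω ⟨i, hi⟩ => ⟨i, fun j => hi (j.castLE hr)⟩
  have hlim := tendsto_measure_iInter_atTop (μ := P)
    (fun r => MeasurableSet.nullMeasurableSet (by measurability)) hanti ⟨0, measure_ne_top _ _⟩
  refine (ge_of_tendsto' hlim h).trans (measure_mono fun ω hω => ?_)
  obtain ⟨i, hi⟩ : ∃ i, ∀ r : ℕ, ∀ j : Fin r, Y ω i (e j) ≤ 0 := by
    by_contra! hfail
    choose r j hj using hfail
    obtain ⟨i, hi⟩ := mem_iInter.1 hω (Finset.univ.sup r)
    exact (hj i).not_ge (hi ((j i).castLE (Finset.le_sup (Finset.mem_univ i))))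
  have hclosed : IsClosed {t | Y ω i t ≤ 0} := isClosed_le (hYc ω i) continuous_const
  exact ⟨i, fun t => hclosed.closure_subset_iff.2
    (range_subset_iff.2 fun k => hi (k + 1) (Fin.last k)) (he t)⟩

theorem gordon_compact [SeparableSpace S] [SeparableSpace T] [CompactSpace T] [Nonempty T]
    {I J : Type*} [Fintype I] [Fintype J] {A : S → T → I → ℝ} {B : S → T → J → ℝ} {ψ : S → T → ℝ}
    (hA : Continuous fun q : S × T => A q.1 q.2) (hB : Continuous fun q : S × T => B q.1 q.2)
    (hψ : Continuous fun q : S × T => ψ q.1 q.2)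
    (hsame : ∀ s t t', A s t ⬝ᵥ A s t' = B s t ⬝ᵥ B s t')
    (hdiff : ∀ s t s' t', B s t ⬝ᵥ B s' t' ≤ A s t ⬝ᵥ A s' t') :
    stdGaussianPi I {z | ∃ s, ∀ t, ψ s t + A s t ⬝ᵥ z < 0}
      ≤ stdGaussianPi J {z | ∃ s, ∀ t, ψ s t + B s t ⬝ᵥ z ≤ 0} := by
  rcases isEmpty_or_nonempty S with hS | hS
  · simp
  have hY (s : S) : Continuous fun q : (J → ℝ) × T => ψ s q.2 + B s q.2 ⬝ᵥ q.1 := by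
    unfold dotProduct
    fun_prop
  let d := denseSeq S
  let e := denseSeq T
  refine (measure_exists_forall_lt_le_iSup (fun z => by unfold dotProduct; fun_prop)
    (denseRange_denseSeq S) _).trans (iSup_le fun m => ?_)
  have hcols : stdGaussianPi I {z | ∃ i : Fin m, ∀ t, ψ (d i) t + A (d i) t ⬝ᵥ z < 0}
      ≤ stdGaussianPi J {z | ∃ i : Fin m, ∀ t, ψ (d i) t + B (d i) t ⬝ᵥ z ≤ 0} := by
    refine le_measure_exists_forall_le (Y := fun z (i : Fin m) t => ψ (d i) t + B (d i) t ⬝ᵥ z)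
      (fun i t => ((hY (d i)).comp (by fun_prop : Continuous fun z => (z, t))).measurable)
      (fun z i => (hY (d i)).comp (by fun_prop : Continuous fun t => (z, t)))
      (denseRange_denseSeq T) fun r => ?_
    refine le_trans (measure_mono ?_) (gordon_finite
      (A := fun q : Fin m × Fin r => A (d q.1) (e q.2)) (B := fun q => B (d q.1) (e q.2))
      (fun _ _ _ => hsame _ _ _) (fun _ _ => hdiff _ _ _ _) fun q => ψ (d q.1) (e q.2))
    exact fun z ⟨i, hi⟩ => ⟨i, fun j => hi (e j)⟩
  exact hcols.trans (measure_mono fun z ⟨i, hi⟩ => ⟨d i, hi⟩)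

end GordonCompact

/-! ### Gordon's inequality for bilinear Gaussian forms -/

section EuclideanNorm

variable {ι : Type*} [Fintype ι]

lemma l2_nonneg (v : ι → ℝ) : 0 ≤ l2 v := Real.sqrt_nonneg _

lemma l2_mul_self (v : ι → ℝ) : l2 v * l2 v = v ⬝ᵥ v := by
  simpa only [l2, dotProduct, sq] using
    Real.mul_self_sqrt (Finset.sum_nonneg fun i _ => sq_nonneg (v i))

lemma dotProduct_le_l2_mul_l2 (v v' : ι → ℝ) : v ⬝ᵥ v' ≤ l2 v * l2 v' :=
  Real.sum_mul_le_sqrt_mul_sqrt _ _ _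

@[fun_prop]
lemma continuous_l2 : Continuous (l2 : (ι → ℝ) → ℝ) := by
  unfold l2
  fun_prop

end EuclideanNorm

section GordonBilinear

open TopologicalSpace
open scoped Matrix

variable {m k : Type*} [Fintype m] [Fintype k]

/-- The coefficients, in the variables `(z, G)`, of the Gaussian form `‖v‖‖l‖z + c·lᵀGv`. The
extra variable `z` gives it the variance of the form of `splitCoeff` when `c² = 1`. -/
def bilinearCoeff (c : ℝ) (v : k → ℝ) (l : m → ℝ) : Unit ⊕ m × k → ℝ :=
  Sum.elim (fun _ => l2 v * l2 l) fun q => c * (l q.1 * v q.2)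

/-- The coefficients, in the variables `(g, h)`, of the Gaussian form `c·(‖v‖lᵀh − ‖l‖gᵀv)`. -/
def splitCoeff (c : ℝ) (v : k → ℝ) (l : m → ℝ) : k ⊕ m → ℝ :=
  Sum.elim ((-c * l2 l) • v) ((c * l2 v) • l)

lemma bilinearCoeff_dotProduct_bilinearCoeff {c : ℝ} (hc : c * c = 1) (v v' : k → ℝ)
    (l l' : m → ℝ) :
    bilinearCoeff c v l ⬝ᵥ bilinearCoeff c v' l'
      = (l2 v * l2 v') * (l2 l * l2 l') + (l ⬝ᵥ l') * (v ⬝ᵥ v') := by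
  have htensor : ∑ q : m × k, c * (l q.1 * v q.2) * (c * (l' q.1 * v' q.2))
      = (l ⬝ᵥ l') * (v ⬝ᵥ v') := by
    rw [Fintype.sum_prod_type, dotProduct, dotProduct, Finset.sum_mul_sum]
    refine Finset.sum_congr rfl fun i _ => Finset.sum_congr rfl fun j _ => ?_
    linear_combination (l i * v j * l' i * v' j) * hc
  simp only [dotProduct, bilinearCoeff, Fintype.sum_sum_type, Sum.elim_inl, Sum.elim_inr,
    Finset.univ_unique, Finset.sum_singleton] at htensor ⊢
  rw [htensor]
  ring

lemma splitCoeff_dotProduct_splitCoeff {c : ℝ} (hc : c * c = 1) (v v' : k → ℝ) (l l' : m → ℝ) :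
    splitCoeff c v l ⬝ᵥ splitCoeff c v' l'
      = (l2 l * l2 l') * (v ⬝ᵥ v') + (l2 v * l2 v') * (l ⬝ᵥ l') := by
  simp only [splitCoeff, sumElim_dotProduct_sumElim, smul_dotProduct, dotProduct_smul,
    smul_eq_mul]
  linear_combination (l2 l * l2 l' * (v ⬝ᵥ v') + l2 v * l2 v' * (l ⬝ᵥ l')) * hc

lemma splitCoeff_dotProduct_splitCoeff_le {c : ℝ} (hc : c * c = 1) (v v' : k → ℝ) (l l' : m → ℝ) :
    splitCoeff c v l ⬝ᵥ splitCoeff c v' l' ≤ bilinearCoeff c v l ⬝ᵥ bilinearCoeff c v' l' := by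
  rw [splitCoeff_dotProduct_splitCoeff hc, bilinearCoeff_dotProduct_bilinearCoeff hc]
  nlinarith [mul_nonneg (sub_nonneg.2 (dotProduct_le_l2_mul_l2 v v'))
    (sub_nonneg.2 (dotProduct_le_l2_mul_l2 l l'))]

lemma bilinearCoeff_dotProduct_eq_of_eq_or_eq {c : ℝ} (hc : c * c = 1) {v v' : k → ℝ}
    {l l' : m → ℝ} (h : v = v' ∨ l = l') :
    bilinearCoeff c v l ⬝ᵥ bilinearCoeff c v' l' = splitCoeff c v l ⬝ᵥ splitCoeff c v' l' := by
  rw [splitCoeff_dotProduct_splitCoeff hc, bilinearCoeff_dotProduct_bilinearCoeff hc]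
  rcases h with rfl | rfl <;> rw [l2_mul_self] <;> ring

lemma bilinearCoeff_dotProduct (c z : ℝ) (v : k → ℝ) (l : m → ℝ) (G : m → k → ℝ) :
    bilinearCoeff c v l ⬝ᵥ Sum.elim (fun _ => z) (Function.uncurry G)
      = l2 v * l2 l * z + c * (l ⬝ᵥ (G *ᵥ v)) := by
  rw [bilinearCoeff, sumElim_dotProduct_sumElim]
  simp only [dotProduct, Finset.univ_unique, Finset.sum_const, Finset.card_singleton, one_smul,
    Fintype.sum_prod_type, Matrix.mulVec, Finset.mul_sum, Function.uncurry_apply_pair]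
  congr! 3
  ring

lemma splitCoeff_dotProduct (c : ℝ) (v g : k → ℝ) (l h : m → ℝ) :
    splitCoeff c v l ⬝ᵥ Sum.elim g h = c * (l2 v * (l ⬝ᵥ h) - l2 l * (g ⬝ᵥ v)) := by
  simp only [splitCoeff, sumElim_dotProduct_sumElim, smul_dotProduct, smul_eq_mul,
    dotProduct_comm g]
  ring

lemma continuous_bilinearCoeff (c : ℝ) :
    Continuous fun q : (k → ℝ) × (m → ℝ) => bilinearCoeff c q.1 q.2 :=
  continuous_pi <| by
    rintro (_ | q) <;> simp only [bilinearCoeff, Sum.elim_inl, Sum.elim_inr] <;> fun_prop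

lemma continuous_splitCoeff (c : ℝ) :
    Continuous fun q : (k → ℝ) × (m → ℝ) => splitCoeff c q.1 q.2 :=
  continuous_pi <| by
    rintro (j | i) <;> simp only [splitCoeff, Sum.elim_inl, Sum.elim_inr, Pi.smul_apply] <;>
      fun_prop

/-- The index regrouping under which `bilinearCoeff` is read as a form in `(z, G)`. -/
def unitSumProdEquiv (m k : Type*) : (Unit ⊕ m × k → ℝ) ≃ᵐ ℝ × (m → k → ℝ) :=
  (MeasurableEquiv.sumPiEquivProdPi fun _ => ℝ).trans
    ((MeasurableEquiv.funUnique Unit ℝ).prodCongr (MeasurableEquiv.curry m k ℝ))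

lemma measurePreserving_unitSumProdEquiv :
    MeasurePreserving (unitSumProdEquiv m k) (stdGaussianPi _)
      (stdG.prod (Measure.pi fun _ => stdGaussianPi k)) := by
  have hcurry : MeasurePreserving (MeasurableEquiv.curry m k ℝ) (stdGaussianPi (m × k))
      (Measure.pi fun _ => stdGaussianPi k) := by
    refine ⟨MeasurableEquiv.measurable _, ?_⟩
    simpa only [Measure.infinitePi_eq_pi] using!
      Measure.infinitePi_map_curry fun (_ : m) (_ : k) => stdG
  exact ((measurePreserving_funUnique stdG Unit).prod hcurry).comp
    (measurePreserving_sumPiEquivProdPi fun _ => stdG)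

lemma one_le_two_mul_stdG_Iic : 1 ≤ 2 * stdG (Iic 0) := by
  have hneg : MeasurePreserving (fun x : ℝ => -x) stdG stdG :=
    ⟨measurable_neg, by simp [stdG, gaussianReal_map_neg]⟩
  have hsymm : stdG (Ici 0) = stdG (Iic 0) := by
    rw [← hneg.measure_preimage measurableSet_Iic.nullMeasurableSet]
    simp
  calc 1 = stdG (Iic 0 ∪ Ici 0) := by rw [Iic_union_Ici, measure_univ]
    _ ≤ stdG (Iic 0) + stdG (Ici 0) := measure_union_le _ _
    _ = 2 * stdG (Iic 0) := by rw [hsymm, two_mul]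

variable {S T : Type*} [TopologicalSpace S] [SeparableSpace S] [TopologicalSpace T]
  [SeparableSpace T] [CompactSpace T] [Nonempty T]

theorem gordon_bilinear {v : S → T → k → ℝ} {l : S → T → m → ℝ} {ψ : S → T → ℝ}
    (hv : Continuous fun q : S × T => v q.1 q.2) (hl : Continuous fun q : S × T => l q.1 q.2)
    (hψ : Continuous fun q : S × T => ψ q.1 q.2)
    (h : ∀ s t t', v s t = v s t' ∨ l s t = l s t') {c : ℝ} (hc : c * c = 1) :
    Measure.pi (fun _ : m => stdGaussianPi k)
        {G | ∃ s, ∀ t, ψ s t + c * (l s t ⬝ᵥ (G *ᵥ v s t)) < 0}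
      ≤ 2 * (stdGaussianPi k).prod (stdGaussianPi m) {gh | ∃ s, ∀ t,
        ψ s t + c * (l2 (v s t) * (l s t ⬝ᵥ gh.2) - l2 (l s t) * (gh.1 ⬝ᵥ v s t)) ≤ 0} := by
  set E := {G : m → k → ℝ | ∃ s, ∀ t, ψ s t + c * (l s t ⬝ᵥ (G *ᵥ v s t)) < 0}
  set E' := {gh : (k → ℝ) × (m → ℝ) | ∃ s, ∀ t,
    ψ s t + c * (l2 (v s t) * (l s t ⬝ᵥ gh.2) - l2 (l s t) * (gh.1 ⬝ᵥ v s t)) ≤ 0}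
  have hbilinear : stdG (Iic 0) * Measure.pi (fun _ : m => stdGaussianPi k) E
      ≤ stdGaussianPi _ {x | ∃ s, ∀ t, ψ s t + bilinearCoeff c (v s t) (l s t) ⬝ᵥ x < 0} := by
    rw [← Measure.prod_prod, ← measurePreserving_unitSumProdEquiv.measure_preimage_equiv]
    refine measure_mono fun x ⟨hz, s, hs⟩ => ⟨s, fun t => ?_⟩
    obtain ⟨⟨z, G⟩, rfl⟩ := (unitSumProdEquiv m k).symm.surjective x
    rw [MeasurableEquiv.apply_symm_apply] at hz hs
    change ψ s t + bilinearCoeff c (v s t) (l s t) ⬝ᵥ Sum.elim (fun _ => z) (Function.uncurry G) < 0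
    rw [bilinearCoeff_dotProduct]
    have := mul_nonpos_of_nonneg_of_nonpos (mul_nonneg (l2_nonneg (v s t)) (l2_nonneg (l s t))) hz
    linarith [hs t]
  have hsplit : stdGaussianPi _ {x | ∃ s, ∀ t, ψ s t + splitCoeff c (v s t) (l s t) ⬝ᵥ x ≤ 0}
      = (stdGaussianPi k).prod (stdGaussianPi m) E' := by
    have hmp := measurePreserving_sumPiEquivProdPi fun _ : k ⊕ m => stdG
    refine Eq.trans ?_ (hmp.measure_preimage_equiv E')
    congr with x
    obtain ⟨⟨g, h⟩, rfl⟩ := (MeasurableEquiv.sumPiEquivProdPi fun _ : k ⊕ m => ℝ).symm.surjective x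
    simp only [E', MeasurableEquiv.apply_symm_apply, mem_ofPred_eq,
      ← splitCoeff_dotProduct]
    rfl
  calc Measure.pi (fun _ : m => stdGaussianPi k) E
      ≤ 2 * stdG (Iic 0) * Measure.pi (fun _ : m => stdGaussianPi k) E :=
        le_mul_of_one_le_left' one_le_two_mul_stdG_Iic
    _ = 2 * (stdG (Iic 0) * Measure.pi (fun _ : m => stdGaussianPi k) E) := mul_assoc _ _ _
    _ ≤ 2 * (stdGaussianPi k).prod (stdGaussianPi m) E' := by
        gcongr
        refine hbilinear.trans ((gordon_compact ?_ ?_ hψ ?_ ?_).trans_eq hsplit)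
        · exact (continuous_bilinearCoeff c).comp (hv.prodMk hl)
        · exact (continuous_splitCoeff c).comp (hv.prodMk hl)
        · exact fun s t t' => bilinearCoeff_dotProduct_eq_of_eq_or_eq hc (h s t t')
        · exact fun s t s' t' => splitCoeff_dotProduct_splitCoeff_le hc _ _ _ _

end GordonBilinear

/-! ### Minimax values -/

section MinMax

/-- The minimax value `min_{x ∈ K} max_{y ∈ L} a x y`, in the `sInf`/`sSup` form of `xi0` and
`xi1`. -/
def minMax {X Y : Type*} (K : Set X) (L : Set Y) (a : X → Y → ℝ) : ℝ :=
  sInf ((fun x => sSup (a x '' L)) '' K)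

variable {X Y : Type*} [TopologicalSpace X] [TopologicalSpace Y] {K : Set X} {L : Set Y}

lemma continuous_minMax {Z : Type*} [TopologicalSpace Z] (hK : IsCompact K) (hL : IsCompact L)
    {a : Z → X → Y → ℝ} (ha : Continuous fun q : Z × X × Y => a q.1 q.2.1 q.2.2) :
    Continuous fun z => minMax K L (a z) :=
  hK.continuous_sInf <| hL.continuous_sSup (f := fun q : Z × X => a q.1 q.2) <|
    ha.comp (by fun_prop : Continuous fun r : (Z × X) × Y => (r.1.1, r.1.2, r.2))

variable {a : X → Y → ℝ} {t : ℝ}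

lemma minMax_le_iff (hK : IsCompact K) (hK' : K.Nonempty) (hL : IsCompact L) (hL' : L.Nonempty)
    (ha : Continuous fun q : X × Y => a q.1 q.2) :
    minMax K L a ≤ t ↔ ∃ x ∈ K, ∀ y ∈ L, a x y ≤ t := by
  have hmax : Continuous fun x => sSup (a x '' L) := hL.continuous_sSup ha
  have hle (x : X) : sSup (a x '' L) ≤ t ↔ ∀ y ∈ L, a x y ≤ t := by
    have hax : Continuous (a x) := ha.comp (.prodMk_right x)
    rw [csSup_le_iff (hL.image hax).bddAbove (hL'.image _), forall_mem_image]
  simp only [← hle]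
  obtain ⟨x, hx, hmin⟩ := hK.exists_sInf_image_eq hK' hmax.continuousOn
  exact ⟨fun ht => ⟨x, hx, hmin.ge.trans ht⟩, fun ⟨x', hx', ht⟩ =>
    (csInf_le (hK.image hmax).bddBelow (mem_image_of_mem _ hx')).trans ht⟩

lemma le_minMax_iff (hK : IsCompact K) (hK' : K.Nonempty) (hL : IsCompact L) (hL' : L.Nonempty)
    (ha : Continuous fun q : X × Y => a q.1 q.2) :
    t ≤ minMax K L a ↔ ∀ x ∈ K, ∃ y ∈ L, t ≤ a x y := by
  have hmax : Continuous fun x => sSup (a x '' L) := hL.continuous_sSup ha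
  have hle (x : X) : t ≤ sSup (a x '' L) ↔ ∃ y ∈ L, t ≤ a x y := by
    have hax : Continuous (a x) := ha.comp (.prodMk_right x)
    obtain ⟨y, hy, hymax⟩ := hL.exists_sSup_image_eq hL' hax.continuousOn
    exact ⟨fun ht => ⟨y, hy, ht.trans_eq hymax⟩, fun ⟨y', hy', ht⟩ =>
      ht.trans (le_csSup (hL.image hax).bddAbove (mem_image_of_mem _ hy'))⟩
  simp only [← hle]
  rw [minMax, le_csInf_iff (hK.image hmax).bddBelow (hK'.image _), forall_mem_image]

lemma exists_forall_le_of_le_minMax {E F : Type*} [TopologicalSpace E] [AddCommGroup E]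
    [Module ℝ E] [IsTopologicalAddGroup E] [ContinuousSMul ℝ E] [TopologicalSpace F]
    [AddCommGroup F] [Module ℝ F] [IsTopologicalAddGroup F] [ContinuousSMul ℝ F] {K : Set E}
    {L : Set F} (hK : IsCompact K) (hK' : K.Nonempty) (hL : IsCompact L) (hL' : L.Nonempty)
    {a : E → F → ℝ} (ha : Continuous fun q : E × F => a q.1 q.2)
    (hconvex : ∀ y ∈ L, ConvexOn ℝ K (a · y)) (hconcave : ∀ x ∈ K, ConcaveOn ℝ L (a x))
    (h : t ≤ minMax K L a) : ∃ y ∈ L, ∀ x ∈ K, t ≤ a x y := by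
  obtain ⟨x₀, hx₀⟩ := hK'
  obtain ⟨y₀, hy₀⟩ := hL'
  obtain ⟨x, hx, y, hy, hsaddle⟩ := Sion.exists_isSaddlePointOn ⟨x₀, hx₀⟩ (hconvex y₀ hy₀).1 hK
    (fun y _ => (ha.comp (.prodMk_left y)).lowerSemicontinuous.lowerSemicontinuousOn _)
    (fun y hy => (hconvex y hy).quasiconvexOn) (hconcave x₀ hx₀).1 ⟨y₀, hy₀⟩ hL
    (fun x _ => (ha.comp (.prodMk_right x)).upperSemicontinuous.upperSemicontinuousOn _)
    (fun x hx => (hconcave x hx).quasiconcaveOn)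
  obtain ⟨y', hy', ht⟩ := (le_minMax_iff hK ⟨x₀, hx₀⟩ hL ⟨y₀, hy₀⟩ ha).1 h x hx
  exact ⟨y, hy, fun x' hx' => ht.trans (hsaddle x' hx' y' hy')⟩

lemma le_mul_measure_le_of_forall_pos {Ω : Type*} [MeasurableSpace Ω] {P : Measure Ω}
    [IsFiniteMeasure P] {F : Ω → ℝ} (hF : Measurable F) {b c : ENNReal} (hc : c ≠ ⊤)
    (h : ∀ ε > 0, b ≤ c * P {ω | F ω ≤ t + ε}) : b ≤ c * P {ω | F ω ≤ t} := by
  have hlim : Tendsto (fun r => P {ω | F ω ≤ r}) (𝓝[>] t) (𝓝 (P (⋂ r > t, {ω | F ω ≤ r}))) :=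
    tendsto_measure_biInter_gt (fun r _ => (measurableSet_le hF measurable_const).nullMeasurableSet)
      (fun r r' _ hr ω hω => hω.trans hr) ⟨t + 1, by simp, measure_ne_top _ _⟩
  have hInter : ⋂ r > t, {ω | F ω ≤ r} = {ω | F ω ≤ t} := by
    ext ω
    simpa using! (forall_gt_imp_ge_iff_le_of_dense (a₁ := F ω) (a₂ := t))
  rw [← hInter]
  refine ge_of_tendsto (ENNReal.Tendsto.const_mul hlim (.inr hc)) ?_
  filter_upwards [self_mem_nhdsWithin] with r hr
  simpa using h (r - t) (sub_pos.2 hr)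

end MinMax

/-! ### The convex Gaussian min-max theorem -/

section GaussianMinMax

open scoped Matrix

variable {m k : Type*} [Fintype m] [Fintype k] {X : Type*}

/-- The objective of a primary Gaussian optimization problem: `ψ` perturbed by the bilinear form
`−lᵀG(Dx)`. -/
def primaryObjective (ψ : X → (m → ℝ) → ℝ) (D : X → k → ℝ) (G : m → k → ℝ) (x : X)
    (l : m → ℝ) : ℝ :=
  ψ x l - l ⬝ᵥ (G *ᵥ D x)

/-- The objective of the auxiliary Gaussian optimization problem, in which the bilinear form is
replaced by `−‖Dx‖lᵀh + ‖l‖gᵀ(Dx)`. -/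
def auxiliaryObjective (ψ : X → (m → ℝ) → ℝ) (D : X → k → ℝ) (gh : (k → ℝ) × (m → ℝ)) (x : X)
    (l : m → ℝ) : ℝ :=
  ψ x l - l2 (D x) * (l ⬝ᵥ gh.2) + l2 l * (gh.1 ⬝ᵥ D x)

section Continuity

variable [TopologicalSpace X] {ψ : X → (m → ℝ) → ℝ} {D : X → k → ℝ}
  (hψ : Continuous fun q : X × (m → ℝ) => ψ q.1 q.2) (hD : Continuous D)

include hψ hD

lemma continuous_primaryObjective : Continuous fun q : (m → k → ℝ) × X × (m → ℝ) =>
    primaryObjective ψ D q.1 q.2.1 q.2.2 := by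
  unfold primaryObjective Matrix.mulVec dotProduct
  exact (hψ.comp continuous_snd).sub (by fun_prop)

lemma continuous_auxiliaryObjective :
    Continuous fun q : ((k → ℝ) × (m → ℝ)) × X × (m → ℝ) =>
      auxiliaryObjective ψ D q.1 q.2.1 q.2.2 := by
  unfold auxiliaryObjective dotProduct
  exact ((hψ.comp continuous_snd).sub (by fun_prop)).add (by fun_prop)

end Continuity

variable {L : Set (m → ℝ)}

theorem measure_minMax_primaryObjective_le_le [TopologicalSpace X] [SecondCountableTopology X]
    {K : Set X} (hK : IsCompact K) (hK' : K.Nonempty) (hL : IsCompact L) (hL' : L.Nonempty)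
    {ψ : X → (m → ℝ) → ℝ} (hψ : Continuous fun q : X × (m → ℝ) => ψ q.1 q.2)
    {D : X → k → ℝ} (hD : Continuous D) (t : ℝ) :
    Measure.pi (fun _ : m => stdGaussianPi k) {G | minMax K L (primaryObjective ψ D G) ≤ t}
      ≤ 2 * (stdGaussianPi k).prod (stdGaussianPi m)
        {gh | minMax K L (auxiliaryObjective ψ D gh) ≤ t} := by
  have hprim := continuous_primaryObjective hψ hD
  have haux := continuous_auxiliaryObjective hψ hD
  refine le_mul_measure_le_of_forall_pos (continuous_minMax hK hL haux).measurable (by simp)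
    fun ε hε => ?_
  have := isCompact_iff_compactSpace.1 hL
  have := hL'.to_subtype
  have hgordon := gordon_bilinear (S := K) (T := L) (v := fun x _ => D x) (l := fun _ l => l.1)
    (ψ := fun x l => ψ x l - (t + ε)) (c := -1) (by fun_prop) (by fun_prop)
    ((hψ.comp (by fun_prop : Continuous fun q : K × L => (q.1.1, q.2.1))).sub continuous_const)
    (fun _ _ _ => .inl rfl) (by norm_num)
  refine (measure_mono fun G hG => ?_).trans (hgordon.trans ?_)
  · obtain ⟨x, hx, hmax⟩ :=
      (minMax_le_iff hK hK' hL hL' (hprim.comp (.prodMk_right G))).1 hG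
    refine ⟨⟨x, hx⟩, fun l => ?_⟩
    have := hmax l l.2
    unfold primaryObjective at this
    linarith
  · gcongr with gh
    rintro ⟨x, hmax⟩
    refine (minMax_le_iff hK hK' hL hL' (haux.comp (.prodMk_right gh))).2
      ⟨x, x.2, fun l hl => ?_⟩
    have := hmax ⟨l, hl⟩
    unfold auxiliaryObjective
    linarith

theorem measure_le_minMax_primaryObjective_le {E : Type*} [TopologicalSpace E]
    [SecondCountableTopology E] [AddCommGroup E] [Module ℝ E] [IsTopologicalAddGroup E]
    [ContinuousSMul ℝ E] {K : Set E} (hK : IsCompact K) (hK' : K.Nonempty) (hL : IsCompact L)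
    (hL' : L.Nonempty) {ψ : E → (m → ℝ) → ℝ} (hψ : Continuous fun q : E × (m → ℝ) => ψ q.1 q.2)
    (hconvex : ∀ l ∈ L, ConvexOn ℝ K (ψ · l)) (hconcave : ∀ x ∈ K, ConcaveOn ℝ L (ψ x))
    {D : E →ₗ[ℝ] k → ℝ} (hD : Continuous D) (t : ℝ) :
    Measure.pi (fun _ : m => stdGaussianPi k) {G | t ≤ minMax K L (primaryObjective ψ D G)}
      ≤ 2 * (stdGaussianPi k).prod (stdGaussianPi m)
        {gh | t ≤ minMax K L (auxiliaryObjective ψ D gh)} := by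
  have hprim := continuous_primaryObjective hψ hD
  have haux := continuous_auxiliaryObjective hψ hD
  have hneg (x : ℝ) : t ≤ x ↔ -x ≤ -t := neg_le_neg_iff.symm
  simp only [hneg (minMax K L (auxiliaryObjective _ _ _))]
  refine le_mul_measure_le_of_forall_pos (continuous_minMax hK hL haux).measurable.neg (by simp)
    fun ε hε => ?_
  have := isCompact_iff_compactSpace.1 hK
  have := hK'.to_subtype
  have hgordon := gordon_bilinear (S := L) (T := K) (v := fun _ x => D x) (l := fun l _ => l.1)
    (ψ := fun l x => t - ε - ψ x l) (c := 1) (by fun_prop) (by fun_prop)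
    (continuous_const.sub (hψ.comp (by fun_prop : Continuous fun q : L × K => (q.2.1, q.1.1))))
    (fun _ _ _ => .inr rfl) (one_mul 1)
  refine (measure_mono fun G hG => ?_).trans (hgordon.trans ?_)
  · have hconvex' (l) (hl : l ∈ L) : ConvexOn ℝ K (primaryObjective ψ D G · l) :=
      (hconvex l hl).sub ((((dotProductBilin ℝ ℝ l).comp (Matrix.mulVecLin G)).comp
        D).concaveOn (hconvex l hl).1)
    have hconcave' (x) (hx : x ∈ K) : ConcaveOn ℝ L (primaryObjective ψ D G x) :=
      (hconcave x hx).sub (((dotProductBilin ℝ ℝ).flip (G *ᵥ D x)).convexOn (hconcave x hx).1)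
    obtain ⟨l, hl, hmin⟩ := exists_forall_le_of_le_minMax hK hK' hL hL'
      (hprim.comp (.prodMk_right G)) hconvex' hconcave' hG
    refine ⟨⟨l, hl⟩, fun x => ?_⟩
    have := hmin x x.2
    unfold primaryObjective at this
    linarith
  · gcongr with gh
    rintro ⟨l, hmin⟩
    have hle : t - ε ≤ minMax K L (auxiliaryObjective ψ D gh) :=
      (le_minMax_iff hK hK' hL hL' (haux.comp (.prodMk_right gh))).2 fun x hx => ⟨l, l.2, by
        have := hmin ⟨x, hx⟩
        unfold auxiliaryObjective
        linarith⟩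
    change -minMax K L (auxiliaryObjective ψ D gh) ≤ -t + ε
    linarith

end GaussianMinMax

/-! ### Conditionally independent labels -/

section Labels

lemma pi_eq_sum_smul_dirac {ι : Type*} [Fintype ι] [DecidableEq ι] {α : ι → Type*}
    [∀ i, MeasurableSpace (α i)] {μ : ∀ i, Measure (α i)} [∀ i, SigmaFinite (μ i)]
    {F : ∀ i, Finset (α i)} {c : ∀ i, α i → ENNReal}
    (h : ∀ i, μ i = ∑ a ∈ F i, c i a • Measure.dirac a) :
    Measure.pi μ = ∑ y ∈ Fintype.piFinset F, (∏ i, c i (y i)) • Measure.dirac y := by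
  refine Measure.pi_eq fun s hs => ?_
  have hμ (i) : μ i (s i) = ∑ a ∈ F i, c i a * (s i).indicator 1 a := by
    simp [h i, hs i]
  have hind (y : ∀ i, α i) : (univ.pi s).indicator (1 : (∀ i, α i) → ENNReal) y
      = ∏ i, (s i).indicator 1 (y i) := by
    classical
    simp [indicator_apply, Finset.prod_ite_zero]
  simp [hμ, Finset.prod_univ_sum, Finset.prod_mul_distrib, MeasurableSet.univ_pi hs, hind]

lemma bind_sum_smul_dirac {Ω Ω' ι : Type*} [MeasurableSpace Ω] [MeasurableSpace Ω']
    (P : Measure Ω) {F : Finset ι} {c : ι → Ω → ENNReal} {g : ι → Ω → Ω'}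
    (hc : ∀ i ∈ F, Measurable (c i)) (hg : ∀ i ∈ F, Measurable (g i)) :
    (P.bind fun ω => ∑ i ∈ F, c i ω • Measure.dirac (g i ω))
      = ∑ i ∈ F, (P.withDensity (c i)).map (g i) := by
  have hterm {s : Set Ω'} (hs : MeasurableSet s) (i) (hi : i ∈ F) :
      Measurable fun ω => c i ω * s.indicator 1 (g i ω) :=
    (hc i hi).mul ((measurable_one.indicator hs).comp (hg i hi))
  have hker : Measurable fun ω => ∑ i ∈ F, c i ω • Measure.dirac (g i ω) := by
    refine Measure.measurable_of_measurable_coe _ fun s hs => ?_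
    simpa [hs] using Finset.measurable_fun_sum _ (hterm hs)
  ext s hs
  simp only [Measure.bind_apply hs hker.aemeasurable, Measure.coe_finsetSum, Finset.sum_apply,
    Measure.smul_apply, smul_eq_mul, Measure.dirac_apply' _ hs]
  rw [lintegral_finsetSum _ (hterm hs)]
  refine Finset.sum_congr rfl fun i hi => ?_
  rw [Measure.map_apply (hg i hi) hs, withDensity_apply _ (hg i hi hs),
    ← lintegral_indicator (hg i hi hs)]
  congr with ω
  by_cases hω : g i ω ∈ s <;> simp [hω]

lemma withDensity_apply_eq_lintegral_of_measurePreserving_prod {Ω U A : Type*}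
    [MeasurableSpace Ω] [MeasurableSpace U] [MeasurableSpace A] {P : Measure Ω} {τ : Measure U}
    {μ : Measure A} [SFinite μ] {φ : U × A → Ω} (hφ : MeasurePreserving φ (τ.prod μ) P)
    {D : Ω → ENNReal} (hD : Measurable D) {W : U → ENNReal} (hDW : ∀ u a, D (φ (u, a)) = W u)
    {S : Set Ω} (hS : MeasurableSet S) :
    P.withDensity D S = ∫⁻ u, W u * μ {a | φ (u, a) ∈ S} ∂τ := by
  have hDS : Measurable (S.indicator D) := hD.indicator hS
  rw [withDensity_apply _ hS, ← lintegral_indicator hS, ← hφ.lintegral_comp hDS,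
    lintegral_prod (fun q => S.indicator D (φ q)) (hDS.comp hφ.measurable).aemeasurable]
  refine lintegral_congr fun u => ?_
  have hsection : MeasurableSet {a | φ (u, a) ∈ S} :=
    (hφ.measurable.comp measurable_prodMk_left) hS
  rw [← lintegral_indicator_const hsection]
  congr with a
  by_cases ha : φ (u, a) ∈ S <;> simp [ha, hDW]

instance (q : ℝ) : IsFiniteMeasure (signBer q) :=
  ⟨by simp [signBer]⟩

lemma signBer_eq_sum_smul_dirac (q : ℝ) :
    signBer q = ∑ b ∈ ({1, -1} : Finset ℝ), signBer q {b} • Measure.dirac b := by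
  rw [Finset.sum_pair (by norm_num)]
  norm_num [signBer]

@[fun_prop]
lemma measurable_signBer_apply (s : Set ℝ) : Measurable fun q => signBer q s := by
  simp only [signBer, Measure.add_apply, Measure.smul_apply, smul_eq_mul]
  fun_prop

/-- The finite set of sign vectors `{+1, −1}ⁿ`. -/
def signVectors (ι : Type*) [Fintype ι] [DecidableEq ι] : Finset (ι → ℝ) :=
  Fintype.piFinset fun _ => {1, -1}

variable {ι Ω Ω' U A : Type*} [Fintype ι] [DecidableEq ι] [MeasurableSpace Ω]
  [MeasurableSpace Ω'] [MeasurableSpace U] [MeasurableSpace A]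

/- The labels take finitely many values, so `E` need not be jointly measurable in them. -/
lemma bind_map_pi_signBer_apply {P : Measure Ω} {τ : Measure U} {μ : Measure A} [SFinite μ]
    {φ : U × A → Ω} (hφ : MeasurePreserving φ (τ.prod μ) P) {s : Ω → ι → ℝ}
    (hs : Measurable s) {r : U → ι → ℝ} (hsr : ∀ u a, s (φ (u, a)) = r u)
    {J : (ι → ℝ) → Ω → Ω'} (hJ : ∀ y, MeasurableEmbedding (J y))
    (hJ' : ∀ ω, Measurable fun y => J y ω) {E : Set Ω'}
    (hE : ∀ y, MeasurableSet {ω | J y ω ∈ E}) :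
    (P.bind fun ω => (Measure.pi fun i => signBer (s ω i)).map fun y => J y ω) E
      = ∑ y ∈ signVectors ι,
        ∫⁻ u, (∏ i, signBer (r u i) {y i}) * μ {a | J y (φ (u, a)) ∈ E} ∂τ := by
  have hker (ω) : (Measure.pi fun i => signBer (s ω i)).map (fun y => J y ω)
      = ∑ y ∈ signVectors ι, (∏ i, signBer (s ω i) {y i}) • Measure.dirac (J y ω) := by
    rw [pi_eq_sum_smul_dirac fun i => signBer_eq_sum_smul_dirac (s ω i),
      Measure.map_finset_sum (hJ' ω).aemeasurable]
    simp only [Measure.map_smul, Measure.map_dirac' (hJ' ω), signVectors]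
  have hweight (y : ι → ℝ) : Measurable fun ω => ∏ i, signBer (s ω i) {y i} := by fun_prop
  simp only [hker]
  rw [bind_sum_smul_dirac P (fun y _ => hweight y) fun y _ => (hJ y).measurable]
  simp only [Measure.coe_finsetSum, Finset.sum_apply, (hJ _).map_apply]
  refine Finset.sum_congr rfl fun y _ => ?_
  exact withDensity_apply_eq_lintegral_of_measurePreserving_prod hφ (hweight y)
    (fun u a => by rw [hsr]) (hE y)

end Labels

/-! ### Conditioning a Gaussian design on one direction -/

section Conditioning

open scoped Matrix

variable {m k : Type*} [Fintype k]

lemma measurePreserving_mulVec_stdGaussianPi [Fintype m] [DecidableEq m]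
    {A : Matrix m k ℝ} (hA : A * Aᵀ = 1) :
    MeasurePreserving (A *ᵥ ·) (stdGaussianPi k) (stdGaussianPi m) := by
  have hA_meas : Measurable (A *ᵥ ·) := by fun_prop
  refine ⟨hA_meas, (MeasurableEquiv.toLp 2 (m → ℝ)).map_measurableEquiv_injective ?_⟩
  refine Measure.ext_of_charFun (E := EuclideanSpace ℝ m) (funext fun t => ?_)
  have hadjoint : charFun (((stdGaussianPi k).map (A *ᵥ ·)).map (WithLp.toLp 2)) t
      = charFun ((stdGaussianPi k).map (WithLp.toLp 2)) (WithLp.toLp 2 (Aᵀ *ᵥ t.ofLp)) := by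
    rw [Measure.map_map (by fun_prop) hA_meas, charFun_apply, charFun_apply,
      integral_map (by fun_prop) (by fun_prop), integral_map (by fun_prop) (by fun_prop)]
    simp [EuclideanSpace.inner_eq_star_dotProduct, Matrix.dotProduct_mulVec,
      Matrix.mulVec_transpose]
  have hnorm : ‖WithLp.toLp 2 (Aᵀ *ᵥ t.ofLp)‖ ^ 2 = ‖t‖ ^ 2 := by
    rw [EuclideanSpace.real_norm_sq_eq, EuclideanSpace.real_norm_sq_eq]
    simp only [sq]
    change (Aᵀ *ᵥ t.ofLp) ⬝ᵥ (Aᵀ *ᵥ t.ofLp) = t.ofLp ⬝ᵥ t.ofLp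
    rw [Matrix.dotProduct_mulVec, Matrix.vecMul_transpose, Matrix.mulVec_mulVec, hA,
      Matrix.one_mulVec]
  refine hadjoint.trans ?_
  simp only [stdGaussianPi, stdG, MeasurableEquiv.coe_toLp, map_pi_eq_stdGaussian,
    charFun_stdGaussian, ← Complex.ofReal_pow, hnorm]

lemma projv_eq_sub_smul (w v : k → ℝ) : projv w v = v - (w ⬝ᵥ v) • w := rfl

lemma dotProduct_projv (w v v' : k → ℝ) : v ⬝ᵥ projv w v' = projv w v ⬝ᵥ v' := by
  simp only [projv_eq_sub_smul, dotProduct_sub, sub_dotProduct, dotProduct_smul, smul_dotProduct,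
    smul_eq_mul, dotProduct_comm v w]
  ring

lemma projv_self {w : k → ℝ} (hw : w ⬝ᵥ w = 1) : projv w w = 0 := by
  simp [projv_eq_sub_smul, hw]

lemma projv_eq_mulVec [DecidableEq k] (w v : k → ℝ) :
    projv w v = (1 - Matrix.vecMulVec w w) *ᵥ v := by
  simp [projv_eq_sub_smul, Matrix.sub_mulVec, Matrix.vecMulVec_mulVec]

lemma measurePreserving_smul_add_projv {w : k → ℝ} (hw : w ⬝ᵥ w = 1) :
    MeasurePreserving (fun q : ℝ × (k → ℝ) => q.1 • w + projv w q.2)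
      (stdG.prod (stdGaussianPi k)) (stdGaussianPi k) := by
  classical
  have hsplit : MeasurePreserving ((MeasurableEquiv.sumPiEquivProdPi fun _ => ℝ).trans
      ((MeasurableEquiv.funUnique Unit ℝ).prodCongr (.refl _))) (stdGaussianPi (Unit ⊕ k))
      (stdG.prod (stdGaussianPi k)) :=
    ((measurePreserving_funUnique stdG Unit).prod (.id _)).comp
      (measurePreserving_sumPiEquivProdPi fun _ => stdG)
  have hunit : Matrix.fromCols (Matrix.replicateCol Unit w) (1 - Matrix.vecMulVec w w)
      * (Matrix.fromCols (Matrix.replicateCol Unit w) (1 - Matrix.vecMulVec w w))ᵀ = 1 := by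
    rw [Matrix.transpose_fromCols, Matrix.fromCols_mul_fromRows]
    simp [Matrix.sub_mul, Matrix.mul_sub, Matrix.vecMulVec_mul_vecMulVec, hw,
      ← Matrix.vecMulVec_eq]
  convert! (measurePreserving_mulVec_stdGaussianPi hunit).comp hsplit.symm using 1
  ext1 q
  change _ = _ *ᵥ Sum.elim (fun _ => q.1) q.2
  rw [Matrix.fromCols_mulVec_sumElim, projv_eq_mulVec]
  congr 1
  ext j
  simp [Matrix.mulVec, dotProduct, mul_comm]

/-- The Gaussian design with component `u i` along `w` in the `i`-th row and orthogonal component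
taken from `G`. -/
def design (w : k → ℝ) (u : m → ℝ) (G : m → k → ℝ) : m → k → ℝ :=
  fun i => u i • w + projv w (G i)

lemma measurePreserving_design [Fintype m] {w : k → ℝ} (hw : w ⬝ᵥ w = 1) :
    MeasurePreserving (fun q : (m → ℝ) × (m → k → ℝ) => design w q.1 q.2)
      ((stdGaussianPi m).prod (Measure.pi fun _ => stdGaussianPi k))
      (Measure.pi fun _ => stdGaussianPi k) :=
  (measurePreserving_pi _ _ fun _ => measurePreserving_smul_add_projv hw).comp
    (measurePreserving_arrowProdEquivProdArrow ℝ (k → ℝ) m (fun _ => stdG)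
      fun _ => stdGaussianPi k).symm

lemma dotProduct_design {w : k → ℝ} (hw : w ⬝ᵥ w = 1) (u : m → ℝ) (G : m → k → ℝ) (i : m) :
    w ⬝ᵥ design w u G i = u i := by
  simp [design, dotProduct_add, hw, dotProduct_projv, projv_self hw]

lemma design_mulVec (w v : k → ℝ) (u : m → ℝ) (G : m → k → ℝ) :
    design w u G *ᵥ v = (w ⬝ᵥ v) • u + G *ᵥ projv w v := by
  ext i
  change (u i • w + projv w (G i)) ⬝ᵥ v = (w ⬝ᵥ v) * u i + G i ⬝ᵥ projv w v
  rw [add_dotProduct, smul_dotProduct, dotProduct_projv, smul_eq_mul, mul_comm]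

end Conditioning

/-! ### The max-margin objectives -/

section MaxMarginObjectives

open scoped Matrix

lemma l2_eq_norm {ι : Type*} [Fintype ι] (v : ι → ℝ) : l2 v = ‖WithLp.toLp 2 v‖ := by
  simp [l2, EuclideanSpace.norm_eq]

lemma l2_smul {ι : Type*} [Fintype ι] {c : ℝ} (hc : 0 ≤ c) (v : ι → ℝ) :
    l2 (c • v) = c * l2 v := by
  simp [l2_eq_norm, norm_smul, abs_of_nonneg hc]

lemma setOf_l2_le_one_eq_image {ι : Type*} [Fintype ι] :
    {v : ι → ℝ | l2 v ≤ 1}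
      = EuclideanSpace.equiv ι ℝ '' Metric.closedBall (0 : EuclideanSpace ℝ ι) 1 := by
  ext v
  simp [l2_eq_norm, ContinuousLinearEquiv.image_eq_preimage_symm]

lemma isCompact_setOf_l2_le_one {ι : Type*} [Fintype ι] : IsCompact {v : ι → ℝ | l2 v ≤ 1} := by
  rw [setOf_l2_le_one_eq_image]
  exact (isCompact_closedBall _ _).image (EuclideanSpace.equiv ι ℝ).continuous

lemma convex_setOf_l2_le_one {ι : Type*} [Fintype ι] : Convex ℝ {v : ι → ℝ | l2 v ≤ 1} := by
  rw [setOf_l2_le_one_eq_image]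
  exact (convex_closedBall _ _).linear_image (EuclideanSpace.equiv ι ℝ).toLinearMap

lemma zero_mem_setOf_l2_le_one {ι : Type*} [Fintype ι] : (0 : ι → ℝ) ∈ {v : ι → ℝ | l2 v ≤ 1} := by
  simp [l2_eq_norm]

variable {n p : ℕ}

lemma isCompact_lamSet (y : Fin n → ℝ) : IsCompact (lamSet n y) :=
  isCompact_setOf_l2_le_one.inter_right
    (isClosed_Ici.preimage (by fun_prop : Continuous fun l : Fin n → ℝ => y * l))

lemma convex_lamSet (y : Fin n → ℝ) : Convex ℝ (lamSet n y) :=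
  convex_setOf_l2_le_one.inter ((convex_Ici 0).linear_preimage (LinearMap.mulLeft ℝ y))

lemma lamSet_nonempty (y : Fin n → ℝ) : (lamSet n y).Nonempty :=
  ⟨0, zero_mem_setOf_l2_le_one, by simp⟩

/-- The linear map `θ ↦ p^{−1/2} Π_{w⊥} Λ^{1/2} θ`. -/
def scaledProj (Λ w : Fin p → ℝ) : (Fin p → ℝ) →ₗ[ℝ] Fin p → ℝ :=
  (√p)⁻¹ • ((1 - Matrix.vecMulVec w w) * Matrix.diagonal fun j => √(Λ j)).mulVecLin

/-- The part `p^{−1/2} λᵀ(κy − ⟨Λ^{1/2}w, θ⟩u)` of the objectives that is deterministic given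
`(u, y)`. -/
def marginTerm (κ : ℝ) (Λ w : Fin p → ℝ) (u y : Fin n → ℝ) (θ : Fin p → ℝ) (l : Fin n → ℝ) : ℝ :=
  (√p)⁻¹ * (l ⬝ᵥ (κ • y - (w ⬝ᵥ fun j => √(Λ j) * θ j) • u))

lemma scaledProj_apply (Λ w θ : Fin p → ℝ) :
    scaledProj Λ w θ = (√p)⁻¹ • projv w fun j => √(Λ j) * θ j := by
  simp only [scaledProj, LinearMap.smul_apply, Matrix.mulVecLin_apply, ← Matrix.mulVec_mulVec,
    projv_eq_mulVec]
  congr 2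
  ext j
  exact Matrix.mulVec_diagonal _ _ _

lemma continuous_marginTerm (κ : ℝ) (Λ w : Fin p → ℝ) (u y : Fin n → ℝ) :
    Continuous fun q : (Fin p → ℝ) × (Fin n → ℝ) => marginTerm κ Λ w u y q.1 q.2 := by
  unfold marginTerm dotProduct
  fun_prop

lemma continuous_scaledProj (Λ w : Fin p → ℝ) : Continuous (scaledProj Λ w) :=
  LinearMap.continuous_of_finiteDimensional _

lemma convexOn_marginTerm (κ : ℝ) (Λ w : Fin p → ℝ) (u y l : Fin n → ℝ) {Θ : Set (Fin p → ℝ)}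
    (hΘ : Convex ℝ Θ) : ConvexOn ℝ Θ (marginTerm κ Λ w u y · l) := by
  refine ⟨hΘ, fun θ _ θ' _ a b _ _ hab => le_of_eq ?_⟩
  have hlinear : (fun j => √(Λ j) * (a • θ + b • θ') j)
      = a • (fun j => √(Λ j) * θ j) + b • fun j => √(Λ j) * θ' j := by
    ext j
    simp only [Pi.add_apply, Pi.smul_apply, smul_eq_mul]
    ring
  simp only [marginTerm, hlinear, dotProduct_add, dotProduct_sub, dotProduct_smul, smul_eq_mul]
  linear_combination -(√p)⁻¹ * κ * (l ⬝ᵥ y) * hab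

lemma concaveOn_marginTerm (κ : ℝ) (Λ w θ : Fin p → ℝ) (u y : Fin n → ℝ) :
    ConcaveOn ℝ (lamSet n y) (marginTerm κ Λ w u y θ) :=
  ((√p)⁻¹ • (dotProductBilin ℝ ℝ).flip
    (κ • y - (w ⬝ᵥ fun j => √(Λ j) * θ j) • u)).concaveOn (convex_lamSet y)

lemma xi0_design (κ : ℝ) (Λ w : Fin p → ℝ) (Θ : Set (Fin p → ℝ)) (u y : Fin n → ℝ)
    (G : Fin n → Fin p → ℝ) :
    xi0 n p κ Λ Θ (design w u G) y
      = minMax Θ (lamSet n y) (primaryObjective (marginTerm κ Λ w u y) (scaledProj Λ w) G) := by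
  have hobj (θ : Fin p → ℝ) (l : Fin n → ℝ) :
      (√p)⁻¹ * ∑ i, l i * (κ * y i - ∑ j, design w u G i j * √(Λ j) * θ j)
        = primaryObjective (marginTerm κ Λ w u y) (scaledProj Λ w) G θ l := by
    set v : Fin p → ℝ := fun j => √(Λ j) * θ j
    have hscale : G *ᵥ ((√p)⁻¹ • projv w v) = (√p)⁻¹ • (G *ᵥ projv w v) :=
      Matrix.mulVec_smul G _ _
    calc
      _ = (√p)⁻¹ * (l ⬝ᵥ (κ • y - design w u G *ᵥ v)) := by
        simp [dotProduct, Matrix.mulVec, v, mul_assoc]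
      _ = _ := by
        rw [design_mulVec, primaryObjective, marginTerm, scaledProj_apply, hscale]
        simp only [dotProduct_sub, dotProduct_add, dotProduct_smul, smul_eq_mul, v]
        ring
  simp only [xi0, minMax, hobj]

lemma xi1_eq_minMax (κ : ℝ) (Λ w : Fin p → ℝ) (Θ : Set (Fin p → ℝ)) (g : Fin p → ℝ)
    (h u y : Fin n → ℝ) :
    xi1 n p κ Λ w Θ g h u y
      = minMax Θ (lamSet n y)
        (auxiliaryObjective (marginTerm κ Λ w u y) (scaledProj Λ w) (g, h)) := by
  have hobj (θ : Fin p → ℝ) (l : Fin n → ℝ) :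
      (√p)⁻¹ * ((∑ i, l i * (κ * y i - (∑ j, √(Λ j) * w j * θ j) * u i
          - l2 (projv w fun j => √(Λ j) * θ j) * h i))
        + l2 l * ∑ j, g j * projv w (fun j' => √(Λ j') * θ j') j)
        = auxiliaryObjective (marginTerm κ Λ w u y) (scaledProj Λ w) (g, h) θ l := by
    set v : Fin p → ℝ := fun j => √(Λ j) * θ j
    calc
      _ = (√p)⁻¹ * (l ⬝ᵥ (κ • y - (w ⬝ᵥ v) • u - l2 (projv w v) • h)
          + l2 l * (g ⬝ᵥ projv w v)) := by
        simp [dotProduct, v, mul_left_comm, mul_assoc]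
      _ = _ := by
        rw [auxiliaryObjective, marginTerm, scaledProj_apply, l2_smul (by positivity)]
        simp only [dotProduct_sub, dotProduct_smul, smul_eq_mul]
        ring
  simp only [xi1, minMax, hobj]

lemma continuous_xi0 (κ : ℝ) (Λ : Fin p → ℝ) {Θ : Set (Fin p → ℝ)} (hΘ : IsCompact Θ)
    (y : Fin n → ℝ) : Continuous fun M => xi0 n p κ Λ Θ M y :=
  continuous_minMax hΘ (isCompact_lamSet y) (by fun_prop)

lemma continuous_xi1 (κ : ℝ) (Λ w : Fin p → ℝ) {Θ : Set (Fin p → ℝ)} (hΘ : IsCompact Θ)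
    (y : Fin n → ℝ) :
    Continuous fun q : (Fin p → ℝ) × (Fin n → ℝ) × (Fin n → ℝ) =>
      xi1 n p κ Λ w Θ q.1 q.2.1 q.2.2 y := by
  unfold xi1 projv
  exact continuous_minMax hΘ (isCompact_lamSet y) (by fun_prop)

end MaxMarginObjectives

/-! ### Comparison of the two models -/

section Comparison

variable {n p : ℕ} {f : ℝ → ℝ} {w : Fin p → ℝ}

lemma mu0_le_two_mul_mu1 (hf : Measurable f) (ρ : ℝ) (hw : w ⬝ᵥ w = 1)
    {E₀ : Set ((Fin n → Fin p → ℝ) × (Fin n → ℝ))}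
    {E₁ : Set ((Fin p → ℝ) × (Fin n → ℝ) × (Fin n → ℝ) × (Fin n → ℝ))}
    (hE₀ : ∀ y, MeasurableSet {M | (M, y) ∈ E₀})
    (hE₁ : ∀ y, MeasurableSet {q : (Fin p → ℝ) × (Fin n → ℝ) × (Fin n → ℝ) |
      (q.1, q.2.1, q.2.2, y) ∈ E₁})
    (hle : ∀ u y, Measure.pi (fun _ : Fin n => stdGaussianPi (Fin p)) {G | (design w u G, y) ∈ E₀}
      ≤ 2 * (stdGaussianPi (Fin p)).prod (stdGaussianPi (Fin n))
        {gh | (gh.1, gh.2, u, y) ∈ E₁}) :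
    mu0 n p f ρ w E₀ ≤ 2 * mu1 n p f ρ E₁ := by
  have hmu0 := bind_map_pi_signBer_apply (measurePreserving_design (m := Fin n) hw)
    (s := fun M i => f (ρ * (w ⬝ᵥ M i))) (r := fun u i => f (ρ * u i))
    (by unfold dotProduct; fun_prop) (fun u G => by simp only [dotProduct_design hw])
    (J := fun y M => (M, y)) measurableEmbedding_prod_mk_right (fun M => measurable_prodMk_left)
    hE₀
  have hrotate : MeasurePreserving
      (fun q : (Fin n → ℝ) × ((Fin p → ℝ) × (Fin n → ℝ)) => (q.2.1, q.2.2, q.1))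
      ((stdGaussianPi (Fin n)).prod ((stdGaussianPi (Fin p)).prod (stdGaussianPi (Fin n))))
      ((stdGaussianPi (Fin p)).prod ((stdGaussianPi (Fin n)).prod (stdGaussianPi (Fin n)))) :=
    (measurePreserving_prodAssoc _ _ _).comp Measure.measurePreserving_swap
  have hmu1 := bind_map_pi_signBer_apply hrotate
    (s := fun q i => f (ρ * q.2.2 i)) (r := fun u i => f (ρ * u i)) (by fun_prop)
    (fun _ _ => rfl) (J := fun y q => (q.1, q.2.1, q.2.2, y))
    (fun y => .prodMap .id (.prodMap .id (measurableEmbedding_prod_mk_right y)))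
    (fun _ => by fun_prop) hE₁
  refine (hmu0.trans_le ?_).trans_eq (congrArg (2 * ·) hmu1.symm)
  rw [Finset.mul_sum]
  refine Finset.sum_le_sum fun y _ => ?_
  rw [← lintegral_const_mul' _ _ (by simp)]
  refine lintegral_mono fun u => ?_
  rw [mul_left_comm]
  exact mul_le_mul_right (hle u y) _

variable {Θ : Set (Fin p → ℝ)} (hf : Measurable f) (κ ρ : ℝ) (Λ : Fin p → ℝ) (hw : w ⬝ᵥ w = 1)
  (hΘ : IsCompact Θ) (hΘ' : Θ.Nonempty) (t : ℝ)

include hf hw hΘ hΘ'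

lemma mu0_xi0_le_le :
    mu0 n p f ρ w {q | xi0 n p κ Λ Θ q.1 q.2 ≤ t}
      ≤ 2 * mu1 n p f ρ {q | xi1 n p κ Λ w Θ q.1 q.2.1 q.2.2.1 q.2.2.2 ≤ t} := by
  refine mu0_le_two_mul_mu1 hf ρ hw
    (fun y => measurableSet_le (continuous_xi0 κ Λ hΘ y).measurable measurable_const)
    (fun y => measurableSet_le (continuous_xi1 κ Λ w hΘ y).measurable measurable_const)
    fun u y => ?_
  simp only [mem_ofPred_eq, xi0_design, xi1_eq_minMax]
  exact measure_minMax_primaryObjective_le_le hΘ hΘ' (isCompact_lamSet y) (lamSet_nonempty y)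
    (continuous_marginTerm κ Λ w u y) (continuous_scaledProj Λ w) t

lemma mu0_le_xi0_le (hconvex : Convex ℝ Θ) :
    mu0 n p f ρ w {q | t ≤ xi0 n p κ Λ Θ q.1 q.2}
      ≤ 2 * mu1 n p f ρ {q | t ≤ xi1 n p κ Λ w Θ q.1 q.2.1 q.2.2.1 q.2.2.2} := by
  refine mu0_le_two_mul_mu1 hf ρ hw
    (fun y => measurableSet_le measurable_const (continuous_xi0 κ Λ hΘ y).measurable)
    (fun y => measurableSet_le measurable_const (continuous_xi1 κ Λ w hΘ y).measurable)
    fun u y => ?_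
  simp only [mem_ofPred_eq, xi0_design, xi1_eq_minMax]
  exact measure_le_minMax_primaryObjective_le hΘ hΘ' (isCompact_lamSet y) (lamSet_nonempty y)
    (continuous_marginTerm κ Λ w u y) (fun l _ => convexOn_marginTerm κ Λ w u y l hconvex)
    (fun θ _ => concaveOn_marginTerm κ Λ w θ u y) (continuous_scaledProj Λ w) t

end Comparison

lemma dotProduct_self_eq_one_of_eq_div_l2 {ι : Type*} [Fintype ι] {v w : ι → ℝ} {ρ : ℝ}
    (hρ : ρ = l2 v) (hρpos : 0 < ρ) (hw : ∀ j, w j = v j / ρ) : w ⬝ᵥ w = 1 := by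
  have hw' : w = ρ⁻¹ • v := funext fun j => by simp [hw, div_eq_inv_mul]
  have hv : v ⬝ᵥ v = ρ * ρ := by rw [hρ, l2_mul_self]
  rw [hw', smul_dotProduct, dotProduct_smul, hv, smul_eq_mul, smul_eq_mul]
  field_simp

theorem statement_10_general (n p : ℕ) (κ : ℝ) (f : ℝ → ℝ) (hf : Measurable f)
    (_ : ∀ x, f x ∈ Set.Icc (0 : ℝ) 1) (Λ : Fin p → ℝ) (_ : ∀ j, 0 ≤ Λ j) (ρ : ℝ)
    (w : Fin p → ℝ) (hw : w ⬝ᵥ w = 1) (Θ : Set (Fin p → ℝ)) (hΘc : IsCompact Θ)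
    (hΘne : Θ.Nonempty) (t : ℝ) :
    mu0 n p f ρ w {q | xi0 n p κ Λ Θ q.1 q.2 ≤ t}
        ≤ 2 * mu1 n p f ρ {q | xi1 n p κ Λ w Θ q.1 q.2.1 q.2.2.1 q.2.2.2 ≤ t}
    ∧ (Convex ℝ Θ →
        mu0 n p f ρ w {q | t ≤ xi0 n p κ Λ Θ q.1 q.2}
          ≤ 2 * mu1 n p f ρ {q | t ≤ xi1 n p κ Λ w Θ q.1 q.2.1 q.2.2.1 q.2.2.2}) :=
  ⟨mu0_xi0_le_le hf κ ρ Λ hw hΘc hΘne t, mu0_le_xi0_le hf κ ρ Λ hw hΘc hΘne t⟩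

/-- Gordon comparison inequalities between the primary optimization value `ξ⁽⁰⁾` and the
auxiliary Gaussian optimization value `ξ⁽¹⁾`, over the unit ball and over an arbitrary
nonempty compact set `Θ` (with the last inequality requiring `Θ` convex). -/
theorem statement_10 (n p : ℕ) (κ : ℝ) (hκ : 0 ≤ κ)
    (f : ℝ → ℝ) (hf : Measurable f) (hf01 : ∀ x, f x ∈ Set.Icc (0:ℝ) 1)
    (Λ : Fin p → ℝ) (hΛ : ∀ j, 0 < Λ j)
    (θs : Fin p → ℝ) (ρ : ℝ) (w : Fin p → ℝ)
    (hρ : ρ = l2 (fun j => Real.sqrt (Λ j) * θs j)) (hρpos : 0 < ρ)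
    (hw : ∀ j, w j = Real.sqrt (Λ j) * θs j / ρ)
    (Θ : Set (Fin p → ℝ)) (hΘc : IsCompact Θ) (hΘne : Θ.Nonempty)
    (t : ℝ) :
    (mu0 n p f ρ w {q | xi0 n p κ Λ {θ : Fin p → ℝ | l2 θ ≤ 1} q.1 q.2 ≤ t}
        ≤ 2 * mu1 n p f ρ
            {q | xi1 n p κ Λ w {θ : Fin p → ℝ | l2 θ ≤ 1} q.1 q.2.1 q.2.2.1 q.2.2.2 ≤ t})
    ∧ (mu0 n p f ρ w {q | t ≤ xi0 n p κ Λ {θ : Fin p → ℝ | l2 θ ≤ 1} q.1 q.2}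
        ≤ 2 * mu1 n p f ρ
            {q | t ≤ xi1 n p κ Λ w {θ : Fin p → ℝ | l2 θ ≤ 1} q.1 q.2.1 q.2.2.1 q.2.2.2})
    ∧ (mu0 n p f ρ w {q | xi0 n p κ Λ Θ q.1 q.2 ≤ t}
        ≤ 2 * mu1 n p f ρ {q | xi1 n p κ Λ w Θ q.1 q.2.1 q.2.2.1 q.2.2.2 ≤ t})
    ∧ (Convex ℝ Θ →
        mu0 n p f ρ w {q | t ≤ xi0 n p κ Λ Θ q.1 q.2}
          ≤ 2 * mu1 n p f ρ {q | t ≤ xi1 n p κ Λ w Θ q.1 q.2.1 q.2.2.1 q.2.2.2}) := by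
  have hw1 : w ⬝ᵥ w = 1 := dotProduct_self_eq_one_of_eq_div_l2 hρ hρpos hw
  have hcomparison := statement_10_general n p κ f hf hf01 Λ (fun j => (hΛ j).le) ρ w hw1
  have hball := hcomparison {θ | l2 θ ≤ 1} isCompact_setOf_l2_le_one
    ⟨0, zero_mem_setOf_l2_le_one⟩ t
  exact ⟨hball.1, hball.2 convex_setOf_l2_le_one, hcomparison Θ hΘc hΘne t⟩

end MaxMargin
end
end
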